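/- Let k ≥ 2, ε > 0 and u ≥ 1. For every δ > 0 there exists D_0 > 0 such that for every constant D ≥ D_0 in the definition of the prior set P_n and every scheme Q ∈ D_{ε,E}, liminf_{n→∞} n^{u/2} Σ_{i=1}^k r_{i,Bayes}^{ℓ_u^u}(Q) ≥ k C_u M(k,ε)^{u/2} − δ. -/

import Mathlib

/-!
The bound is a local asymptotic minimax argument carried out by hand, one coordinate at a time.

*Reduction to segments.* Near the uniform distribution the support of the prior is a Euclidean
ball in the hyperplane `∑ p = 1`, and the Hausdorff measure there is translation invariant. For the
coordinate `i`, average the prior over translations along `(s / √n) w`, `|s| ≤ T`, where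
`w = dir k i` satisfies `∑ w = 0` and `w i = 1`. Up to the factor `((D - 2T) / D) ^ (k - 1)`, which
tends to `1` as `D → ∞`, the Bayes risk dominates the risk with a uniform prior on such a segment,
uniformly over its centre (`lintegral_flatBall_ge`, `core_uniform`).

*One-dimensional problem.* Along a segment the rescaled likelihood ratio is bounded below by
`exp (t Δ - t² S / 2)` with `Δ` asymptotically `N(0, J)` and `S → J` (`likelihood_lower`,
`tendsto_sum_gaussian`), where `J = outInfo q i` is a Fisher information. The posterior loss in a
Gaussian shift experiment is minimized at the posterior mean by symmetry and convexity of `|·|^u`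
(`truncMom_le`), which gives the limit `C_u J^(-u/2)` up to truncation terms that vanish when
`T → ∞`. Because `J` may vanish, an independent Gaussian observation of information `η > 0` is
added (`gcore_mix_le`); it can only decrease the risk and replaces `J` by `J + η`.

*Optimization over schemes.* Each row of a scheme in `D_{ε,E}` takes two values, so its contribution
to `∑ i, outInfo q i` is explicit and is at most its value for `d = d*` (`row_bound`); hence
`∑ i, outInfo q i ≤ k / M`. Convexity of `x ↦ x^(-u/2)` then gives
`∑ i, (J_i + η)^(-u/2) ≥ k (1/M + η)^(-u/2)` (`sum_rpow_neg_ge`). The parameters are chosen in the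
order `η`, truncation radius `R`, `T`, `D₀` (`exists_parameters`).
-/

open MeasureTheory ProbabilityTheory Filter Real
open scoped ENNReal NNReal

noncomputable section

/-- The probability simplex Δ_k ⊆ ℝ^k. -/
def simplex (k : ℕ) : Set (Fin k → ℝ) :=
  {p | (∀ i, 0 ≤ p i) ∧ ∑ i, p i = 1}

/-- ε-local differential privacy for a Markov kernel from `Fin k` to `Y`. -/
def IsPrivate {Y : Type} [MeasurableSpace Y] {k : ℕ} (ε : ℝ) (Q : Kernel (Fin k) Y) : Prop :=
  IsMarkovKernel Q ∧
    ∀ S : Set Y, MeasurableSet S → ∀ x x' : Fin k,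
      Q x S ≤ ENNReal.ofReal (Real.exp ε) * Q x' S

/-- The marginal distribution m = pQ of a privatized sample. -/
def marginal {Y : Type} [MeasurableSpace Y] {k : ℕ} (Q : Kernel (Fin k) Y)
    (p : Fin k → ℝ) : Measure Y :=
  ∑ i, ENNReal.ofReal (p i) • Q i

/-- Worst-case ℓ_u^u risk of the mechanism `Q` with estimator `est` from `n` samples. -/
def risk {Y : Type} [MeasurableSpace Y] (k n : ℕ) (u : ℝ) (Q : Kernel (Fin k) Y)
    (est : (Fin n → Y) → Fin k → ℝ) : ℝ≥0∞ :=
  ⨆ p ∈ simplex k,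
    ∫⁻ y, ENNReal.ofReal (∑ i, |est y i - p i| ^ u)
      ∂(Measure.pi fun _ : Fin n => marginal Q p)

/-- Minimax ℓ_u^u risk of the mechanism `Q` from `n` samples. -/
def minimaxRisk {Y : Type} [MeasurableSpace Y] (k n : ℕ) (u : ℝ) (Q : Kernel (Fin k) Y) : ℝ≥0∞ :=
  ⨅ (est : (Fin n → Y) → Fin k → ℝ) (_ : Measurable est), risk k n u Q est

/-- Output alphabet Y_{k,d} : subsets of {1,…,k} of size d. -/
def Out (k d : ℕ) : Type := {S : Finset (Fin k) // S.card = d}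

instance (k d : ℕ) : Fintype (Out k d) := Subtype.fintype _
instance (k d : ℕ) : MeasurableSpace (Out k d) := ⊤
instance (k d : ℕ) : MeasurableSingletonClass (Out k d) := ⟨fun _ => trivial⟩
instance (k d : ℕ) : DecidableEq (Out k d) := Subtype.instDecidableEq

/-- Q_{k,ε,d}(y|i). -/
def schemeP (k : ℕ) (ε : ℝ) (d : ℕ) (i : Fin k) (y : Out k d) : ℝ :=
  (if i ∈ y.1 then Real.exp ε else 1) /
    ((k-1).choose (d-1) * Real.exp ε + (k-1).choose d)

/-- The scheme Q_{k,ε,d} as a Markov kernel. -/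
def schemeKernel (k : ℕ) (ε : ℝ) (d : ℕ) : Kernel (Fin k) (Out k d) :=
  Kernel.ofFunOfCountable fun i =>
    ∑ y : Out k d, ENNReal.ofReal (schemeP k ε d i y) • Measure.dirac y

/-- Constant A of the empirical estimator. -/
def Aconst (k d : ℕ) (ε : ℝ) : ℝ :=
  (((k:ℝ)-1) * Real.exp ε + ((k:ℝ)-1)*((k:ℝ)-d)/d) / (((k:ℝ)-d)*(Real.exp ε - 1))

/-- Constant B of the empirical estimator. -/
def Bconst (k d : ℕ) (ε : ℝ) : ℝ :=
  (((d:ℝ)-1) * Real.exp ε + ((k:ℝ)-d)) / (((k:ℝ)-d)*(Real.exp ε - 1))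

/-- t_i(y^n): the number of privatized samples whose i-th coordinate is 1. -/
def tcount {k d n : ℕ} (i : Fin k) (y : Fin n → Out k d) : ℕ :=
  (Finset.univ.filter fun j => i ∈ (y j).1).card

/-- The empirical estimator p̂ under Q_{k,ε,d}. -/
def empEst (k d n : ℕ) (ε : ℝ) (y : Fin n → Out k d) (i : Fin k) : ℝ :=
  Aconst k d ε * ((tcount i y : ℝ) / n) - Bconst k d ε

/-- Marginal probability (pQ_{k,ε,d})(y). -/
def margP (k : ℕ) (ε : ℝ) (d : ℕ) (p : Fin k → ℝ) (y : Out k d) : ℝ :=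
  ∑ i, p i * schemeP k ε d i y

/-- Membership in D_{ε,E}: a finite-output ε-LDP scheme, given by the matrix
`q j v = Q(j|v)`, whose conditional probability ratios take only values 1 and e^ε. -/
def memDEE (k L : ℕ) (ε : ℝ) (q : Fin L → Fin k → ℝ) : Prop :=
  (∀ j v, 0 ≤ q j v) ∧ (∀ v, ∑ j, q j v = 1) ∧
  (∀ j v v', q j v ≤ Real.exp ε * q j v') ∧
  (∀ j v, q j v / (⨅ v', q j v') ∈ ({1, Real.exp ε} : Set ℝ))

/-- q_j = (1/k) Σ_v q_{jv}. -/
def qrow {k L : ℕ} (q : Fin L → Fin k → ℝ) (j : Fin L) : ℝ :=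
  (1/(k:ℝ)) * ∑ v, q j v

/-- A finite-output scheme (matrix) as a Markov kernel. -/
def matKernel (k L : ℕ) (q : Fin L → Fin k → ℝ) : Kernel (Fin k) (Fin L) :=
  Kernel.ofFunOfCountable fun v =>
    ∑ j, ENNReal.ofReal (q j v) • Measure.dirac j

/-- C_u = E|X|^u for X standard normal. -/
def Cmom (u : ℝ) : ℝ := ∫ x, |x| ^ u ∂(gaussianReal 0 1)

/-- g(s) = (s e^ε + k − s)² / (s(k−s)). -/
def gfun (ε k s : ℝ) : ℝ := (s * Real.exp ε + k - s)^2 / (s * (k - s))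

/-- d* is a minimizer of (d e^ε + k − d)²/(d(k−d)) over d ∈ {1,…,k−1}. -/
def IsOptDstar (k : ℕ) (ε : ℝ) (dstar : ℕ) : Prop :=
  dstar ∈ Finset.Icc 1 (k-1) ∧
    ∀ d ∈ Finset.Icc 1 (k-1), gfun ε k dstar ≤ gfun ε k d

/-- M(k,ε). -/
def Mconst (k : ℕ) (ε : ℝ) (dstar : ℕ) : ℝ :=
  (((k:ℝ)-1)^2 / ((k:ℝ)^2 * (Real.exp ε - 1)^2)) * gfun ε k dstar

/-- The prior set P_n = {p ∈ Δ_k : ‖p − p_U‖₂ ≤ D/√n}. -/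
def Pball (k : ℕ) (D : ℝ) (n : ℕ) : Set (Fin k → ℝ) :=
  {p | p ∈ simplex k ∧ Real.sqrt (∑ i, (p i - 1/(k:ℝ))^2) ≤ D / Real.sqrt n}

/-- The uniform distribution on P_n: normalized (k−1)-dimensional Hausdorff measure. -/
def unifP (k : ℕ) (D : ℝ) (n : ℕ) : Measure (Fin k → ℝ) :=
  ((μH[((k:ℝ)-1)]) (Pball k D n))⁻¹ • (μH[((k:ℝ)-1)]).restrict (Pball k D n)

/-- Component-wise optimal Bayes ℓ_u^u risk for the finite-output scheme `q`,
with the uniform prior on P_n. -/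
def bayesRisk (k L : ℕ) (u : ℝ) (q : Fin L → Fin k → ℝ) (D : ℝ) (n : ℕ) (i : Fin k) : ℝ≥0∞ :=
  ⨅ est : (Fin n → Fin L) → ℝ,
    ∫⁻ p, (∑ y : Fin n → Fin L,
        (∏ j, ENNReal.ofReal (∑ v, p v * q (y j) v)) *
          ENNReal.ofReal (|est y - p i| ^ u))
      ∂(unifP k D n)

end

section
open Topology BoundedContinuousFunction

/-! ### A central limit theorem for triangular arrays on finite alphabets -/

/-- The law of `∑ i, f (y i)` for `y` drawn from the `n`-fold product of the weights `m`. -/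
noncomputable def sumLaw {ι : Type} [Fintype ι] (n : ℕ) (m f : ι → ℝ) : Measure ℝ :=
  ∑ y : Fin n → ι, ENNReal.ofReal (∏ i, m (y i)) • Measure.dirac (∑ i, f (y i))

lemma sumLaw_prob {ι : Type} [Fintype ι] (n : ℕ) (m f : ι → ℝ) (hm0 : ∀ j, 0 ≤ m j)
    (hm1 : ∑ j, m j = 1) : IsProbabilityMeasure (sumLaw n m f) := by
  constructor
  simp only [sumLaw, Measure.coe_finsetSum, Finset.sum_apply, Measure.smul_apply, measure_univ,
    smul_eq_mul, mul_one]
  rw [← ENNReal.ofReal_sum_of_nonneg (fun y _ => Finset.prod_nonneg fun i _ => hm0 _),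
    ← Fintype.sum_pow, hm1]
  simp

lemma integral_sumLaw {ι : Type} [Fintype ι] {E : Type*} [NormedAddCommGroup E] [NormedSpace ℝ E]
    [CompleteSpace E] (n : ℕ) (m f : ι → ℝ)
    (hm0 : ∀ j, 0 ≤ m j) (g : ℝ → E) :
    ∫ x, g x ∂(sumLaw n m f) = ∑ y : Fin n → ι, (∏ i, m (y i)) • g (∑ i, f (y i)) := by
  unfold sumLaw
  rw [integral_finsetSum_measure]
  · refine Finset.sum_congr rfl fun y _ => ?_
    rw [integral_smul_measure, integral_dirac,
      ENNReal.toReal_ofReal (Finset.prod_nonneg fun i _ => hm0 _)]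
  · intro y _
    exact (integrable_dirac (by simp)).smul_measure ENNReal.ofReal_ne_top

lemma charFun_sumLaw {ι : Type} [Fintype ι] (n : ℕ) (m f : ι → ℝ)
    (hm0 : ∀ j, 0 ≤ m j) (t : ℝ) :
    charFun (sumLaw n m f) t = (∑ j, (m j : ℂ) * Complex.exp (t * f j * Complex.I)) ^ n := by
  rw [charFun_apply_real, integral_sumLaw n m f hm0, Fintype.sum_pow]
  refine Finset.sum_congr rfl fun y _ => ?_
  rw [Finset.prod_mul_distrib, ← Complex.exp_sum, Complex.real_smul]
  push_cast
  rw [Finset.mul_sum, Finset.sum_mul]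

/-- Central limit theorem for triangular arrays of finitely supported variables whose first two
moments converge after multiplication by `n` and whose third moment is negligible. The limit
variance may be `0`, so that the weak law of large numbers is included. -/
lemma tendsto_sum_gaussian {ι : Type} [Fintype ι] (m f : ℕ → ι → ℝ) (hm0 : ∀ n j, 0 ≤ m n j)
    (hm1 : ∀ n, ∑ j, m n j = 1) (μ0 : ℝ) (v : ℝ≥0)
    (h1 : Tendsto (fun n : ℕ => (n : ℝ) * ∑ j, m n j * f n j) atTop (𝓝 μ0))
    (h2 : Tendsto (fun n : ℕ => (n : ℝ) * ∑ j, m n j * f n j ^ 2) atTop (𝓝 v))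
    (h3 : Tendsto (fun n : ℕ => (n : ℝ) * ∑ j, m n j * |f n j| ^ 3) atTop (𝓝 0))
    (hb : ∀ j, Tendsto (fun n => f n j) atTop (𝓝 0)) (g : ℝ →ᵇ ℝ) :
    Tendsto (fun n : ℕ => ∑ y : Fin n → ι, (∏ i, m n (y i)) * g (∑ i, f n (y i))) atTop
      (𝓝 (∫ x, g x ∂(gaussianReal μ0 v))) := by
  have hP : ∀ n, IsProbabilityMeasure (sumLaw n (m n) (f n)) := fun n =>
    sumLaw_prob n _ _ (hm0 n) (hm1 n)
  let p : ℕ → ProbabilityMeasure ℝ := fun n => ⟨sumLaw n (m n) (f n), hP n⟩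
  let p0 : ProbabilityMeasure ℝ := ⟨gaussianReal μ0 v, inferInstance⟩
  have key : Tendsto p atTop (𝓝 p0) := by
    rw [ProbabilityMeasure.tendsto_iff_tendsto_charFun]
    intro t
    simp only [p, p0, ProbabilityMeasure.coe_mk, charFun_gaussianReal]
    simp_rw [charFun_sumLaw _ _ _ (hm0 _)]
    set r : ℕ → ι → ℂ := fun n j => Complex.exp (t * f n j * Complex.I) -
      (1 + t * f n j * Complex.I - t ^ 2 * f n j ^ 2 / 2) with hr
    set G : ℕ → ℂ := fun n => ∑ j, (m n j : ℂ) * Complex.exp (t * f n j * Complex.I) - 1 with hG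
    have e1 : ∀ n, ∑ j, (m n j : ℂ) * Complex.exp (t * f n j * Complex.I) = 1 + G n := by
      intro n; simp [hG]
    simp_rw [e1]
    apply Complex.tendsto_one_add_pow_exp_of_tendsto
    have e2 : ∀ n : ℕ, (n : ℂ) * G n = ((n * ∑ j, m n j * f n j : ℝ) : ℂ) * (t * Complex.I)
        - ((n * ∑ j, m n j * f n j ^ 2 : ℝ) : ℂ) * (t ^ 2 / 2) + n * ∑ j, (m n j : ℂ) * r n j := by
      intro n
      have hs : (∑ j, (m n j : ℂ)) = 1 := by exact_mod_cast hm1 n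
      have : G n = ((∑ j, m n j * f n j : ℝ) : ℂ) * (t * Complex.I)
        - ((∑ j, m n j * f n j ^ 2 : ℝ) : ℂ) * (t ^ 2 / 2) + ∑ j, (m n j : ℂ) * r n j := by
        simp only [hG, ← hs]
        push_cast
        rw [Finset.sum_mul, Finset.sum_mul, ← Finset.sum_sub_distrib, ← Finset.sum_sub_distrib,
          ← Finset.sum_add_distrib]
        refine Finset.sum_congr rfl fun j _ => ?_
        simp only [hr]; ring
      rw [this]; push_cast; ring
    have e3 : Tendsto (fun n : ℕ => (n : ℂ) * ∑ j, (m n j : ℂ) * r n j) atTop (𝓝 0) := by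
      have hbd : ∀ᶠ n : ℕ in atTop, ‖(n : ℂ) * ∑ j, (m n j : ℂ) * r n j‖ ≤
          |t| ^ 3 * ((n : ℝ) * ∑ j, m n j * |f n j| ^ 3) := by
        have hsm : ∀ᶠ n in atTop, ∀ j, |t * f n j| ≤ 1 := by
          rw [eventually_all]
          intro j
          have : Tendsto (fun n => |t * f n j|) atTop (𝓝 |t * 0|) := ((hb j).const_mul t).abs
          rw [mul_zero, abs_zero] at this
          exact this.eventually_le_const one_pos
        filter_upwards [hsm] with n hn
        rw [norm_mul, Complex.norm_natCast, mul_left_comm, Finset.mul_sum]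
        refine mul_le_mul_of_nonneg_left ((norm_sum_le _ _).trans
          (Finset.sum_le_sum fun j _ => ?_)) (Nat.cast_nonneg n)
        rw [norm_mul, Complex.norm_real, Real.norm_of_nonneg (hm0 n j), mul_left_comm]
        refine mul_le_mul_of_nonneg_left ?_ (hm0 n j)
        have hx : ‖(t * f n j * Complex.I : ℂ)‖ = |t * f n j| := by
          rw [norm_mul, Complex.norm_I, mul_one, ← Complex.ofReal_mul, Complex.norm_real,
            Real.norm_eq_abs]
        have := Complex.exp_bound (x := (t * f n j * Complex.I : ℂ)) (by rw [hx]; exact hn j)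
          (n := 3) (by norm_num)
        rw [hx] at this
        have h4 : r n j = Complex.exp (t * f n j * Complex.I) -
            ∑ k ∈ Finset.range 3, (t * f n j * Complex.I : ℂ) ^ k / (k.factorial : ℂ) := by
          simp only [hr, Finset.sum_range_succ, Finset.sum_range_zero, Nat.factorial]
          have : (t * f n j * Complex.I : ℂ) ^ 2 = - (t ^ 2 * f n j ^ 2) := by
            rw [mul_pow, Complex.I_sq]; ring
          rw [this]; push_cast; ring
        rw [h4]
        refine this.trans ?_
        rw [abs_mul, mul_pow]
        have : (0:ℝ) ≤ |t| ^ 3 * |f n j| ^ 3 := by positivity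
        norm_num [Nat.factorial]
        nlinarith
      have h3' := h3.const_mul (|t| ^ 3)
      rw [mul_zero] at h3'
      exact squeeze_zero_norm' hbd h3'
    simp_rw [e2]
    have := (((Complex.continuous_ofReal.tendsto _).comp h1).mul_const (t * Complex.I : ℂ)).sub
      (((Complex.continuous_ofReal.tendsto _).comp h2).mul_const (t ^ 2 / 2 : ℂ)) |>.add e3
    refine (this.congr fun n => rfl).trans (le_of_eq ?_)
    congr 1
    rw [add_zero]
    ring_nf
  rw [ProbabilityMeasure.tendsto_iff_forall_integral_tendsto] at key
  have := key g
  simp only [p, p0, ProbabilityMeasure.coe_mk] at this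
  simpa only [integral_sumLaw _ _ _ (hm0 _), smul_eq_mul] using this

/-! ### Posterior loss in the Gaussian shift experiment -/

/-- Truncated Gaussian moment `∫_{-R}^{R} e^{-J s²/2} |s|^u ds` (not normalized). -/
noncomputable def truncMom (J R u : ℝ) : ℝ := ∫ s in (-R)..R, exp (-(J * s ^ 2 / 2)) * |s| ^ u

lemma continuous_abs_rpow {u : ℝ} (hu : 1 ≤ u) : Continuous fun s : ℝ => |s| ^ u :=
  continuous_abs.rpow_const fun _ => Or.inr (by linarith)

lemma truncMom_nonneg {J R u : ℝ} (hR : 0 ≤ R) : 0 ≤ truncMom J R u :=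
  intervalIntegral.integral_nonneg (by linarith) fun s _ => by positivity

/-- Among all centres, `0` minimizes the loss against an even weight: average the losses at
`c` and `-c` and use the convexity of `|·|^u`. -/
lemma truncMom_le {J R u : ℝ} (hR : 0 ≤ R) (hu : 1 ≤ u) (c : ℝ) :
    truncMom J R u ≤ ∫ s in (-R)..R, exp (-(J * s ^ 2 / 2)) * |c - s| ^ u := by
  have hc := continuous_abs_rpow hu
  have c1 : Continuous fun s : ℝ => exp (-(J * s ^ 2 / 2)) * |c - s| ^ u :=
    (by fun_prop : Continuous fun s : ℝ => exp (-(J * s ^ 2 / 2))).mul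
      (hc.comp (continuous_const.sub continuous_id))
  have c2 : Continuous fun s : ℝ => exp (-(J * s ^ 2 / 2)) * |c + s| ^ u :=
    (by fun_prop : Continuous fun s : ℝ => exp (-(J * s ^ 2 / 2))).mul
      (hc.comp (continuous_const.add continuous_id))
  have c3 : Continuous fun s : ℝ => exp (-(J * s ^ 2 / 2)) * |s| ^ u :=
    (by fun_prop : Continuous fun s : ℝ => exp (-(J * s ^ 2 / 2))).mul hc
  have e : ∫ s in (-R)..R, exp (-(J * s ^ 2 / 2)) * |c + s| ^ u =
      ∫ s in (-R)..R, exp (-(J * s ^ 2 / 2)) * |c - s| ^ u := by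
    have := intervalIntegral.integral_comp_neg (a := -R) (b := R)
      (fun s : ℝ => exp (-(J * s ^ 2 / 2)) * |c - s| ^ u)
    simpa using this
  have key : 2 * truncMom J R u ≤ ∫ s in (-R)..R,
      (exp (-(J * s ^ 2 / 2)) * |c + s| ^ u + exp (-(J * s ^ 2 / 2)) * |c - s| ^ u) := by
    unfold truncMom
    rw [← intervalIntegral.integral_const_mul]
    refine intervalIntegral.integral_mono_on (by linarith)
      ((continuous_const.mul c3).intervalIntegrable _ _) ((c2.add c1).intervalIntegrable _ _)
      fun s _ => ?_
    have h := (convexOn_rpow hu).2 (Set.mem_Ici.2 (abs_nonneg (c + s)))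
      (Set.mem_Ici.2 (abs_nonneg (c - s))) (show (0:ℝ) ≤ 1 / 2 by norm_num)
      (show (0:ℝ) ≤ 1 / 2 by norm_num) (by norm_num)
    simp only [smul_eq_mul] at h
    have h2 : |s| ^ u ≤ (1 / 2 * |c + s| + 1 / 2 * |c - s|) ^ u := by
      refine Real.rpow_le_rpow (abs_nonneg _) ?_ (by linarith)
      have h3 := abs_sub (c + s) (c - s)
      have : c + s - (c - s) = 2 * s := by ring
      rw [this, abs_mul, abs_two] at h3
      linarith
    have := exp_pos (-(J * s ^ 2 / 2))
    nlinarith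
  rw [intervalIntegral.integral_add (c2.intervalIntegrable _ _) (c1.intervalIntegrable _ _), e]
    at key
  linarith

/-- The (unnormalized) posterior loss for a uniform prior on `[-T, T]` and a Gaussian likelihood. -/
lemma posterior_lower {J R T u : ℝ} (hJ : 0 < J) (hR : 0 ≤ R) (hu : 1 ≤ u)
    {z : ℝ} (hz : |z| ≤ J * (T - R)) (c : ℝ) :
    exp (z ^ 2 / (2 * J)) * truncMom J R u ≤
      ∫ t in (-T)..T, exp (t * z - t ^ 2 * J / 2) * |c - t| ^ u := by
  have hc := continuous_abs_rpow hu
  have c1 : Continuous fun t : ℝ => exp (t * z - t ^ 2 * J / 2) * |c - t| ^ u :=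
    (by fun_prop : Continuous fun t : ℝ => exp (t * z - t ^ 2 * J / 2)).mul
      (hc.comp (continuous_const.sub continuous_id))
  have hz' : |z / J| ≤ T - R := by
    rw [abs_div, abs_of_pos hJ, div_le_iff₀ hJ]; linarith
  obtain ⟨h1, h2⟩ := abs_le.1 hz'
  have step : ∫ t in (z / J + -R)..(z / J + R), exp (t * z - t ^ 2 * J / 2) * |c - t| ^ u ≤
      ∫ t in (-T)..T, exp (t * z - t ^ 2 * J / 2) * |c - t| ^ u :=
    intervalIntegral.integral_mono_interval (by linarith) (by linarith) (by linarith)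
      (ae_of_all _ fun t => by simp only [Pi.zero_apply]; positivity) (c1.intervalIntegrable _ _)
  refine le_trans ?_ step
  rw [← intervalIntegral.integral_comp_add_left
    (fun t => exp (t * z - t ^ 2 * J / 2) * |c - t| ^ u) (z / J)]
  have e : ∀ s, exp ((z / J + s) * z - (z / J + s) ^ 2 * J / 2) * |c - (z / J + s)| ^ u =
      exp (z ^ 2 / (2 * J)) * (exp (-(J * s ^ 2 / 2)) * |(c - z / J) - s| ^ u) := by
    intro s
    rw [← mul_assoc, ← Real.exp_add, sub_add_eq_sub_sub]
    congr 2
    field_simp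
    ring
  simp_rw [e]
  rw [intervalIntegral.integral_const_mul]
  exact mul_le_mul_of_nonneg_left (truncMom_le hR hu _) (exp_pos _).le

/-- A continuous cut-off: `1` on `|z| ≤ B - 1`, `0` on `|z| ≥ B`. -/
noncomputable def cutoff (B z : ℝ) : ℝ := max 0 (min 1 (B - |z|))

lemma cutoff_nonneg (B z : ℝ) : 0 ≤ cutoff B z := le_max_left _ _
lemma cutoff_le_one (B z : ℝ) : cutoff B z ≤ 1 := max_le zero_le_one (min_le_left _ _)
lemma cutoff_eq_zero {B z : ℝ} (h : B ≤ |z|) : cutoff B z = 0 :=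
  max_eq_left ((min_le_right _ _).trans (by linarith))
lemma cutoff_eq_one {B z : ℝ} (h : |z| ≤ B - 1) : cutoff B z = 1 := by
  rw [cutoff, min_eq_left (by linarith), max_eq_right zero_le_one]
lemma continuous_cutoff (B : ℝ) : Continuous (cutoff B) := by
  unfold cutoff; fun_prop

lemma gcore_bound {J B K : ℝ} (hJ : 0 < J) (hK : 0 ≤ K) (z : ℝ) :
    ‖exp (z ^ 2 / (2 * J)) * cutoff B z * K‖ ≤ exp (B ^ 2 / (2 * J)) * K := by
  have h0 := cutoff_nonneg B z
  rw [Real.norm_of_nonneg (by positivity)]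
  refine mul_le_mul_of_nonneg_right ?_ hK
  rcases le_or_gt B |z| with h | h
  · rw [cutoff_eq_zero h, mul_zero]; positivity
  · have : z ^ 2 ≤ B ^ 2 := by
      rw [← sq_abs z]; exact pow_le_pow_left₀ (abs_nonneg _) h.le 2
    calc exp (z ^ 2 / (2 * J)) * cutoff B z ≤ exp (z ^ 2 / (2 * J)) * 1 :=
          mul_le_mul_of_nonneg_left (cutoff_le_one _ _) (exp_pos _).le
      _ ≤ exp (B ^ 2 / (2 * J)) := by rw [mul_one]; gcongr

/-- Bounded continuous minorant, uniform over the decision, of the Gaussian posterior loss. -/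
noncomputable def gcore (J R T u : ℝ) (hJ : 0 < J) (hR : 0 ≤ R) : ℝ →ᵇ ℝ :=
  BoundedContinuousFunction.ofNormedAddCommGroup
    (fun z => exp (z ^ 2 / (2 * J)) * cutoff (J * (T - R)) z * truncMom J R u)
    (by have := continuous_cutoff (J * (T - R)); fun_prop)
    (exp ((J * (T - R)) ^ 2 / (2 * J)) * truncMom J R u)
    (gcore_bound hJ (truncMom_nonneg hR))

lemma gcore_apply {J R T u : ℝ} (hJ : 0 < J) (hR : 0 ≤ R) (z : ℝ) : gcore J R T u hJ hR z =
  exp (z ^ 2 / (2 * J)) * cutoff (J * (T - R)) z * truncMom J R u := rfl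

lemma gcore_nonneg {J R T u : ℝ} (hJ : 0 < J) (hR : 0 ≤ R) (z : ℝ) :
    0 ≤ gcore J R T u hJ hR z := by
  rw [gcore_apply]
  have := truncMom_nonneg (J := J) (u := u) hR
  have := cutoff_nonneg (J * (T - R)) z
  positivity

lemma gcore_le {J R T u : ℝ} (hJ : 0 < J) (hR : 0 ≤ R) (hT : 0 ≤ T) (hu : 1 ≤ u) (z c : ℝ) :
    gcore J R T u hJ hR z ≤ ∫ t in (-T)..T, exp (t * z - t ^ 2 * J / 2) * |c - t| ^ u := by
  rw [gcore_apply]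
  rcases le_or_gt (J * (T - R)) |z| with h | h
  · rw [cutoff_eq_zero h, mul_zero, zero_mul]
    exact intervalIntegral.integral_nonneg (by linarith) fun t _ => by positivity
  · refine le_trans ?_ (posterior_lower hJ hR hu h.le c)
    refine mul_le_mul_of_nonneg_right ?_ (truncMom_nonneg hR)
    exact mul_le_of_le_one_right (exp_pos _).le (cutoff_le_one _ _)

/-- An independent Gaussian observation of information `η` can only decrease the loss; since it
can be integrated out, the minorant at information `J₀ + η` yields one at information `J₀`. -/
lemma gcore_mix_le {J₀ R T u : ℝ} {η : ℝ≥0} (hJ : 0 < J₀ + η) (hR : 0 ≤ R) (hT : 0 ≤ T)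
    (hu : 1 ≤ u) (x c : ℝ) :
    ∫ w, gcore (J₀ + η) R T u hJ hR (x + w) ∂(gaussianReal 0 η) ≤
      ∫ t in (-T)..T, exp (t * x - t ^ 2 * J₀ / 2) * |c - t| ^ u := by
  have hc := continuous_abs_rpow hu
  set h : ℝ → ℝ := fun t => exp (t * x - t ^ 2 * (J₀ + η) / 2) * |c - t| ^ u with hh
  have ch : Continuous h :=
    (by fun_prop : Continuous fun t : ℝ => exp (t * x - t ^ 2 * (J₀ + η) / 2)).mul
      (hc.comp (continuous_const.sub continuous_id))
  have hint : Integrable (Function.uncurry fun t w : ℝ => exp (t * w) * h t)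
      ((volume.restrict (Set.uIoc (-T) T)).prod (gaussianReal 0 η)) := by
    have i1 : Integrable h (volume.restrict (Set.uIoc (-T) T)) :=
      (intervalIntegrable_iff.1 (ch.intervalIntegrable (-T) T))
    have i2 : Integrable (fun w => exp (T * w) + exp (-T * w)) (gaussianReal 0 η) :=
      (integrable_exp_mul_gaussianReal T).add (integrable_exp_mul_gaussianReal (-T))
    have i3 := i1.mul_prod i2
    refine i3.mono' (by
      apply Continuous.aestronglyMeasurable
      simp only [Function.uncurry_def]
      have := ch.comp (continuous_fst (X := ℝ) (Y := ℝ))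
      exact (by fun_prop : Continuous fun p : ℝ × ℝ => exp (p.1 * p.2)).mul this) ?_
    have hm : ∀ᵐ p ∂((volume.restrict (Set.uIoc (-T) T)).prod (gaussianReal 0 η)),
        p.1 ∈ Set.uIoc (-T) T :=
      Measure.quasiMeasurePreserving_fst.ae (ae_restrict_mem measurableSet_uIoc)
    filter_upwards [hm] with p hp
    rw [Set.uIoc_of_le (by linarith)] at hp
    have hpos : 0 ≤ h p.1 := by simp only [hh]; positivity
    simp only [Function.uncurry_def]
    rw [Real.norm_of_nonneg (by positivity), mul_comm]
    refine mul_le_mul_of_nonneg_left ?_ hpos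
    rcases le_total 0 p.2 with h0 | h0
    · have : exp (p.1 * p.2) ≤ exp (T * p.2) := by
        apply exp_le_exp.2; exact mul_le_mul_of_nonneg_right hp.2 h0
      have := exp_pos (-T * p.2); linarith
    · have : exp (p.1 * p.2) ≤ exp (-T * p.2) := by
        apply exp_le_exp.2; exact mul_le_mul_of_nonpos_right hp.1.le h0
      have := exp_pos (T * p.2); linarith
  have hsw := intervalIntegral_integral_swap hint
  have e1 : ∀ t, ∫ w, exp (t * w) * h t ∂(gaussianReal 0 η) =
      exp (t * x - t ^ 2 * J₀ / 2) * |c - t| ^ u := by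
    intro t
    have hmgf := congrFun (mgf_id_gaussianReal (μ := 0) (v := η)) t
    simp only [mgf, id] at hmgf
    rw [integral_mul_const, hmgf, hh]
    simp only
    rw [← mul_assoc, ← Real.exp_add]
    congr 2
    ring
  simp_rw [e1] at hsw
  rw [hsw]
  refine integral_mono ?_ ?_ fun w => ?_
  · have := ((gcore (J₀ + η) R T u hJ hR).compContinuous
      ⟨fun w => x + w, by fun_prop⟩).integrable (gaussianReal 0 η)
    exact this
  · have := hint.integral_prod_right
    refine this.congr (ae_of_all _ fun w => ?_)
    simp only
    rw [intervalIntegral.integral_of_le (by linarith), Set.uIoc_of_le (by linarith)]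
    rfl
  · refine (gcore_le hJ hR hT hu (x + w) c).trans (le_of_eq ?_)
    refine intervalIntegral.integral_congr fun t _ => ?_
    simp only [hh]
    rw [← mul_assoc, ← Real.exp_add]
    congr 2
    ring

/-! ### Gaussian averages of the posterior loss -/

/-- Convolution of `g` with the centred Gaussian of variance `η`. -/
noncomputable def smooth (g : ℝ →ᵇ ℝ) (η : ℝ≥0) : ℝ →ᵇ ℝ :=
  BoundedContinuousFunction.ofNormedAddCommGroup (fun x => ∫ w, g (x + w) ∂(gaussianReal 0 η))
    (by
      refine continuous_of_dominated (bound := fun _ => ‖g‖)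
        (fun x => (g.continuous.comp (by fun_prop)).aestronglyMeasurable)
        (fun x => ae_of_all _ fun w => g.norm_coe_le_norm _) (integrable_const _)
        (ae_of_all _ fun w => g.continuous.comp (by fun_prop)))
    ‖g‖ (fun x => by
      refine (norm_integral_le_of_norm_le_const (ae_of_all _ fun w =>
        g.norm_coe_le_norm (x + w))).trans ?_
      simp)

lemma integral_smooth (g : ℝ →ᵇ ℝ) (η J : ℝ≥0) :
    ∫ x, smooth g η x ∂(gaussianReal 0 J) = ∫ x, g x ∂(gaussianReal 0 (J + η)) := by
  have := gaussianReal_conv_gaussianReal (m₁ := 0) (m₂ := 0) (v₁ := J) (v₂ := η)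
  rw [add_zero] at this
  rw [← this, integral_conv (g.integrable _)]
  rfl

/-- Truncated standard normal moment `E[|N|^u ; |N| ≤ r]`. -/
noncomputable def truncC (r u : ℝ) : ℝ := (√(2 * π))⁻¹ * truncMom 1 r u

lemma truncMom_scale {J R u : ℝ} (hJ : 0 < J) :
    truncMom J R u * √J = J ^ (-(u / 2)) * truncMom 1 (R * √J) u := by
  have hs : 0 < √J := Real.sqrt_pos.2 hJ
  have h := intervalIntegral.integral_comp_mul_left (a := -R) (b := R)
    (fun s : ℝ => exp (-(1 * s ^ 2 / 2)) * |s| ^ u) hs.ne'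
  have e : ∀ s, exp (-(1 * (√J * s) ^ 2 / 2)) * |√J * s| ^ u =
      J ^ (u / 2) * (exp (-(J * s ^ 2 / 2)) * |s| ^ u) := by
    intro s
    rw [mul_pow, Real.sq_sqrt hJ.le, abs_mul, abs_of_pos hs, Real.mul_rpow hs.le (abs_nonneg _),
      Real.sqrt_eq_rpow, ← Real.rpow_mul hJ.le, one_mul]
    ring_nf
  simp_rw [e] at h
  rw [intervalIntegral.integral_const_mul] at h
  have h' : J ^ (u / 2) * truncMom J R u = (√J)⁻¹ * truncMom 1 (R * √J) u := by
    unfold truncMom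
    rw [h, smul_eq_mul]
    ring_nf
  rw [Real.rpow_neg hJ.le]
  have hp : 0 < J ^ (u / 2) := by positivity
  field_simp at h' ⊢
  linarith

/-- Lower bound for the Bayes risk in the Gaussian shift experiment of information `J` with
uniform prior on `[-T, T]`. -/
noncomputable def gaussBound (T R J u : ℝ) : ℝ :=
  (T - R - 1 / J) / T * (J ^ (-(u / 2)) * truncC (R * √J) u)

/-- The explicit form of the bound: the Gaussian density cancels the factor `exp (z² / 2J)`, leaving the
length of the interval on which the posterior is well inside `[-T, T]`. -/
lemma gaussBound_le {T R u : ℝ} {J : ℝ≥0} (hJ : (0:ℝ) < J) (hR : 0 ≤ R) (hT : 0 < T) :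
    gaussBound T R J u ≤ 1 / (2 * T) * ∫ z, gcore J R T u hJ hR z ∂(gaussianReal 0 J) := by
  have hK := truncMom_nonneg (J := J) (u := u) hR
  set B := J * (T - R) with hB
  have hJ0 : J ≠ 0 := by rintro rfl; simp at hJ
  have e : ∫ z, gcore J R T u hJ hR z ∂(gaussianReal 0 J) =
      (√(2 * π * J))⁻¹ * truncMom J R u * ∫ z, cutoff B z := by
    rw [integral_gaussianReal_eq_integral_smul hJ0, ← integral_const_mul]
    congr 1; ext z
    rw [gcore_apply, gaussianPDFReal_def, smul_eq_mul]
    have : exp (-(z - 0) ^ 2 / (2 * J)) * exp (z ^ 2 / (2 * J)) = 1 := by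
      rw [← Real.exp_add, sub_zero, neg_div, neg_add_cancel, Real.exp_zero]
    simp only
    linear_combination (√(2 * π * J))⁻¹ * cutoff B z * truncMom J R u * this
  have hint : Integrable (cutoff B) := by
    apply (continuous_cutoff B).integrable_of_hasCompactSupport
    refine HasCompactSupport.intro (isCompact_Icc (a := -B) (b := B)) fun z hz => ?_
    apply cutoff_eq_zero
    by_contra hcon
    exact hz (abs_le.1 (not_le.1 hcon).le)
  have hcut : 2 * (B - 1) ≤ ∫ z, cutoff B z := by
    rcases le_or_gt (B - 1) 0 with h | h
    · exact le_trans (by linarith) (integral_nonneg fun z => cutoff_nonneg B z)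
    · calc 2 * (B - 1) = ∫ z in Set.Icc (-(B - 1)) (B - 1), (1:ℝ) := by
            simp; rw [max_eq_left (by linarith)]; ring
        _ = ∫ z in Set.Icc (-(B - 1)) (B - 1), cutoff B z :=
            setIntegral_congr_fun measurableSet_Icc fun z hz =>
              (cutoff_eq_one (abs_le.2 hz)).symm
        _ ≤ ∫ z, cutoff B z := setIntegral_le_integral hint
            (ae_of_all _ fun z => cutoff_nonneg B z)
  rw [e]
  have hsJ : 0 < √(J:ℝ) := Real.sqrt_pos.2 hJ
  have hsc := truncMom_scale (R := R) (u := u) hJ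
  have hst : √(2 * π * J) = √(2 * π) * √J := Real.sqrt_mul (by positivity) _
  have hp : 0 < √(2 * π) := by positivity
  calc gaussBound T R J u = 1 / (2 * T) * ((√(2 * π * J))⁻¹ * truncMom J R u * (2 * (B - 1))) := by
        unfold gaussBound truncC
        have : (J:ℝ) ^ (-(u / 2)) * ((√(2 * π))⁻¹ * truncMom 1 (R * √J) u) =
          (√(2 * π))⁻¹ * (truncMom J R u * √J) := by rw [hsc]; ring
        rw [this, hst, hB]
        have hJJ : √(J:ℝ) * √J = J := Real.mul_self_sqrt hJ.le
        field_simp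
        rw [Real.sq_sqrt hJ.le]
        ring
    _ ≤ _ := by gcongr

lemma tendsto_truncC {u : ℝ} (hu : 1 ≤ u) : Tendsto (fun r => truncC r u) atTop (𝓝 (Cmom u)) := by
  have hint : Integrable (fun x : ℝ => |x| ^ u) (gaussianReal 0 1) := by
    have h0 : 0 < u := by linarith
    have h := (memLp_id_gaussianReal' (μ := 0) (v := 1) (ENNReal.ofReal u)
      ENNReal.ofReal_ne_top).integrable_norm_rpow
      (by simpa using h0) ENNReal.ofReal_ne_top
    simpa [ENNReal.toReal_ofReal h0.le] using h
  have hint2 : Integrable (fun x : ℝ => (√(2 * π))⁻¹ * (exp (-(1 * x ^ 2 / 2)) * |x| ^ u)) := by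
    have h1 : gaussianReal 0 1 = volume.withDensity (gaussianPDF 0 1) :=
      gaussianReal_of_var_ne_zero _ one_ne_zero
    rw [h1, integrable_withDensity_iff (measurable_gaussianPDF _ _)
      (ae_of_all _ fun _ => gaussianPDF_lt_top)] at hint
    refine hint.congr (ae_of_all _ fun x => ?_)
    simp only [toReal_gaussianPDF, gaussianPDFReal_def]
    simp only [NNReal.coe_one, mul_one, sub_zero]
    ring_nf
  have h := intervalIntegral_tendsto_integral hint2 tendsto_neg_atTop_atBot tendsto_id
  have e : Cmom u = ∫ x : ℝ, (√(2 * π))⁻¹ * (exp (-(1 * x ^ 2 / 2)) * |x| ^ u) := by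
    unfold Cmom
    rw [integral_gaussianReal_eq_integral_smul one_ne_zero]
    congr 1; ext x
    rw [gaussianPDFReal_def, smul_eq_mul]
    simp only [NNReal.coe_one, mul_one, sub_zero]
    ring_nf
  rw [e]
  refine h.congr fun r => ?_
  rw [intervalIntegral.integral_const_mul]
  rfl

lemma truncC_nonneg {r u : ℝ} (hr : 0 ≤ r) : 0 ≤ truncC r u :=
  mul_nonneg (by positivity) (truncMom_nonneg hr)

lemma truncC_mono {r r' u : ℝ} (hr : 0 ≤ r) (h : r ≤ r') (hu : 1 ≤ u) :
    truncC r u ≤ truncC r' u := by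
  have c3 : Continuous fun s : ℝ => exp (-(1 * s ^ 2 / 2)) * |s| ^ u :=
    (by fun_prop : Continuous fun s : ℝ => exp (-(1 * s ^ 2 / 2))).mul (continuous_abs_rpow hu)
  refine mul_le_mul_of_nonneg_left ?_ (by positivity)
  exact intervalIntegral.integral_mono_interval (by linarith) (by linarith) h
    (ae_of_all _ fun s => by simp only [Pi.zero_apply]; positivity) (c3.intervalIntegrable _ _)

/-! ### Local asymptotic normality along a segment -/

lemma exp_le_one_add {x : ℝ} (hx : |x| ≤ 1 / 2) : exp (x - x ^ 2 / 2 - 2 * |x| ^ 3) ≤ 1 + x := by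
  have h1 : |-x| < 1 := by rw [abs_neg]; linarith
  have h := Real.abs_log_sub_add_sum_range_le h1 2
  have hpos : 0 < 1 + x := by have := (abs_le.1 hx).1; linarith
  rw [← Real.le_log_iff_exp_le hpos]
  simp only [Finset.sum_range_succ, Finset.sum_range_zero, abs_neg, sub_neg_eq_add] at h
  norm_num at h
  have h2 : |x| ^ 3 / (1 - |x|) ≤ 2 * |x| ^ 3 := by
    rw [div_le_iff₀ (by linarith)]
    have : 0 ≤ |x| ^ 3 := by positivity
    nlinarith
  have := (abs_le.1 h).1
  linarith

/-- Local asymptotic normality as a pointwise lower bound for the likelihood ratio. -/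
lemma likelihood_lower {ι : Type} {n : ℕ} {m f : ι → ℝ} (hm : ∀ j, 0 ≤ m j) {T β : ℝ}
    (hf : ∀ j, T * |f j| ≤ β) (hβ : β ≤ 1 / 2) {t : ℝ} (ht : |t| ≤ T) (y : Fin n → ι) :
    (∏ i, m (y i)) * exp (-(n * (2 * β ^ 3))) *
      exp (t * (∑ i, f (y i)) - t ^ 2 * (∑ i, f (y i) ^ 2) / 2) ≤
      ∏ i, (m (y i) * (1 + t * f (y i))) := by
  have e : (∏ i, m (y i)) * exp (-(n * (2 * β ^ 3))) *
      exp (t * (∑ i, f (y i)) - t ^ 2 * (∑ i, f (y i) ^ 2) / 2) =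
      ∏ i, (m (y i) * exp (t * f (y i) - t ^ 2 * f (y i) ^ 2 / 2 - 2 * β ^ 3)) := by
    rw [Finset.prod_mul_distrib, ← Real.exp_sum, mul_assoc, ← Real.exp_add]
    congr 2
    rw [Finset.sum_sub_distrib, Finset.sum_sub_distrib, Finset.mul_sum, Finset.mul_sum,
      Finset.sum_div]
    simp
    ring
  rw [e]
  refine Finset.prod_le_prod (fun i _ => mul_nonneg (hm _) (exp_pos _).le) fun i _ => ?_
  refine mul_le_mul_of_nonneg_left ?_ (hm _)
  have hx : |t * f (y i)| ≤ β := by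
    rw [abs_mul]
    exact (mul_le_mul_of_nonneg_right ht (abs_nonneg _)).trans (hf _)
  refine le_trans (exp_le_exp.2 ?_) (exp_le_one_add (hx.trans hβ))
  have : |t * f (y i)| ^ 3 ≤ β ^ 3 := pow_le_pow_left₀ (abs_nonneg _) hx 3
  rw [mul_pow]
  linarith

/-- Penalty for replacing the empirical information `s` by its limit `J₀`. -/
noncomputable def penalty (T J₀ : ℝ) : ℝ →ᵇ ℝ :=
  BoundedContinuousFunction.ofNormedAddCommGroup (fun s => 1 - exp (-(T ^ 2 * |s - J₀| / 2)))
    (by fun_prop) 1 (fun s => by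
      have h1 := exp_pos (-(T ^ 2 * |s - J₀| / 2))
      have h2 : exp (-(T ^ 2 * |s - J₀| / 2)) ≤ 1 := by
        apply Real.exp_le_one_iff.2
        have : 0 ≤ T ^ 2 * |s - J₀| := by positivity
        linarith
      rw [Real.norm_of_nonneg (by linarith)]
      linarith)

lemma penalty_apply (T J₀ s : ℝ) : penalty T J₀ s = 1 - exp (-(T ^ 2 * |s - J₀| / 2)) := rfl

/-- Fixed-sample bound: for each data sequence `y`, the unnormalized posterior loss dominates a bounded
continuous functional of the score `∑ f (y i)` and the empirical information `∑ f (y i) ^ 2`. -/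
lemma finite_lower {ι : Type} {n : ℕ} {m f : ι → ℝ} (hm : ∀ j, 0 ≤ m j) {T β R u J₀ : ℝ}
    {η : ℝ≥0} (hJ : 0 < J₀ + η) (hR : 0 ≤ R) (hT : 0 ≤ T) (hu : 1 ≤ u)
    (hf : ∀ j, T * |f j| ≤ β) (hβ : β ≤ 1 / 2) (y : Fin n → ι) (c : ℝ) :
    exp (-(n * (2 * β ^ 3))) * ((∏ i, m (y i)) *
      (smooth (gcore (J₀ + η) R T u hJ hR) η (∑ i, f (y i)) -
        ‖smooth (gcore (J₀ + η) R T u hJ hR) η‖ * penalty T J₀ (∑ i, f (y i) ^ 2))) ≤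
      ∫ t in (-T)..T, (∏ i, (m (y i) * (1 + t * f (y i)))) * |c - t| ^ u := by
  set G := smooth (gcore (J₀ + η) R T u hJ hR) η with hG
  set x := ∑ i, f (y i)
  set S := ∑ i, f (y i) ^ 2
  have hc := continuous_abs_rpow hu
  have hP : 0 ≤ ∏ i, m (y i) := Finset.prod_nonneg fun i _ => hm _
  have hp1 : 0 ≤ penalty T J₀ S := by
    rw [penalty_apply, sub_nonneg, Real.exp_le_one_iff]
    have : 0 ≤ T ^ 2 * |S - J₀| := by positivity
    linarith
  have cc : Continuous fun t : ℝ => |c - t| ^ u := hc.comp (continuous_const.sub continuous_id)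
  have h1 : G x ≤ ∫ t in (-T)..T, exp (t * x - t ^ 2 * J₀ / 2) * |c - t| ^ u :=
    gcore_mix_le hJ hR hT hu x c
  have h2 : G x * (1 - penalty T J₀ S) ≤
      ∫ t in (-T)..T, exp (t * x - t ^ 2 * S / 2) * |c - t| ^ u := by
    have h3 : 0 ≤ 1 - penalty T J₀ S := by rw [penalty_apply, sub_sub_cancel]; positivity
    refine (mul_le_mul_of_nonneg_right h1 h3).trans ?_
    rw [← intervalIntegral.integral_mul_const]
    refine intervalIntegral.integral_mono_on (by linarith)
      (Continuous.intervalIntegrable (by fun_prop) _ _)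
      (Continuous.intervalIntegrable (by fun_prop) _ _) fun t ht => ?_
    rw [penalty_apply, sub_sub_cancel]
    have : exp (t * x - t ^ 2 * J₀ / 2) * exp (-(T ^ 2 * |S - J₀| / 2)) ≤
        exp (t * x - t ^ 2 * S / 2) := by
      rw [← Real.exp_add, exp_le_exp]
      have ht2 : t ^ 2 ≤ T ^ 2 := sq_le_sq' ht.1 ht.2
      have a1 := le_abs_self (S - J₀)
      have a2 := abs_nonneg (S - J₀)
      nlinarith [mul_le_mul_of_nonneg_right ht2 a2, mul_le_mul_of_nonneg_left a1 (sq_nonneg t)]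
    have h4 : 0 ≤ |c - t| ^ u := by positivity
    nlinarith
  have h5 : G x - ‖G‖ * penalty T J₀ S ≤ G x * (1 - penalty T J₀ S) := by
    have : G x ≤ ‖G‖ := (le_abs_self _).trans (G.norm_coe_le_norm x)
    nlinarith
  calc _ = (∏ i, m (y i)) * exp (-(n * (2 * β ^ 3))) * (G x - ‖G‖ * penalty T J₀ S) := by ring
    _ ≤ (∏ i, m (y i)) * exp (-(n * (2 * β ^ 3))) *
        ∫ t in (-T)..T, exp (t * x - t ^ 2 * S / 2) * |c - t| ^ u :=
      mul_le_mul_of_nonneg_left (h5.trans h2) (by positivity)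
    _ ≤ _ := by
      rw [← intervalIntegral.integral_const_mul]
      refine intervalIntegral.integral_mono_on (by linarith)
        (Continuous.intervalIntegrable (by fun_prop) _ _)
        (Continuous.intervalIntegrable (by fun_prop) _ _) fun t ht => ?_
      rw [← mul_assoc]
      exact mul_le_mul_of_nonneg_right (likelihood_lower hm hf hβ (abs_le.2 ht) y) (by positivity)

/-- Asymptotic lower bound for the Bayes risk along a one-dimensional shift: data from the
distribution `m n + t a / √n` with `t` uniform on `[-T, T]`, uniformly over all decisions `c`. -/
lemma core_eventually {ι : Type} [Fintype ι] {m : ℕ → ι → ℝ} {mₒ a : ι → ℝ}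
    (hm0 : ∀ n j, 0 < m n j) (hm1 : ∀ n, ∑ j, m n j = 1) (hmₒ : ∀ j, 0 < mₒ j)
    (hlim : ∀ j, Tendsto (fun n => m n j) atTop (𝓝 (mₒ j))) (ha : ∑ j, a j = 0)
    {J₀ η : ℝ≥0} (hJ₀ : (J₀ : ℝ) = ∑ j, a j ^ 2 / mₒ j) (hη : 0 < η) {T R u : ℝ}
    (hT : 0 < T) (hR : 0 ≤ R) (hu : 1 ≤ u) {b : ℝ} (hb : b < gaussBound T R (J₀ + η) u) :
    ∀ᶠ n : ℕ in atTop, ∀ c : (Fin n → ι) → ℝ,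
      b ≤ 1 / (2 * T) * ∫ t in (-T)..T, ∑ y : Fin n → ι,
        (∏ i, (m n (y i) + t * a (y i) / √n)) * |c y - t| ^ u := by
  have hη' : (0:ℝ) < η := hη
  have hJ : (0:ℝ) < J₀ + η := by have := J₀.2; positivity
  set G := smooth (gcore (J₀ + η) R T u hJ hR) η with hG
  set f : ℕ → ι → ℝ := fun n j => a j / m n j / √n with hf
  have hsq : Tendsto (fun n : ℕ => (√(n:ℝ))⁻¹) atTop (𝓝 0) :=
    (Real.tendsto_sqrt_atTop.comp tendsto_natCast_atTop_atTop).inv_tendsto_atTop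
  have hr : ∀ j, Tendsto (fun n => a j / m n j) atTop (𝓝 (a j / mₒ j)) := fun j =>
    tendsto_const_nhds.div (hlim j) (hmₒ j).ne'
  have hn : ∀ n : ℕ, 1 ≤ n → (0:ℝ) < √n := fun n h => Real.sqrt_pos.2 (by exact_mod_cast h)
  have hns : ∀ n : ℕ, √(n:ℝ) * √n = n := fun n => Real.mul_self_sqrt n.cast_nonneg
  have hb0 : ∀ j, Tendsto (fun n => f n j) atTop (𝓝 0) := fun j => by
    simpa [hf, div_eq_mul_inv] using (hr j).mul hsq
  have hmf : ∀ n j, m n j * f n j = a j * (√n)⁻¹ := fun n j => by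
    have := (hm0 n j).ne'; simp only [hf]; field_simp
  have k1 : Tendsto (fun n : ℕ => (n:ℝ) * ∑ j, m n j * f n j) atTop (𝓝 0) := by
    simp_rw [hmf, ← Finset.sum_mul, ha]
    simp
  have hq : ∀ j, Tendsto (fun n : ℕ => (n:ℝ) * (m n j * f n j ^ 2)) atTop
      (𝓝 (a j ^ 2 / mₒ j)) := fun j => by
    have h := (hr j).const_mul (a j)
    rw [show a j ^ 2 / mₒ j = a j * (a j / mₒ j) by ring]
    refine h.congr' ?_
    filter_upwards [eventually_ge_atTop 1] with n h1
    have h2 := hn n h1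
    have h3 := (hm0 n j).ne'
    simp only [hf]
    field_simp
    rw [Real.sq_sqrt n.cast_nonneg]
  have hq3 : ∀ p : ℕ, 0 < p → ∀ j, Tendsto (fun n : ℕ => (n:ℝ) * (m n j * f n j ^ 2) * |f n j| ^ p)
      atTop (𝓝 0) := fun p hp j => by
    have := (hq j).mul (((hb0 j).abs).pow p)
    simpa [hp.ne'] using this
  have k2 : Tendsto (fun n : ℕ => (n:ℝ) * ∑ j, m n j * f n j ^ 2) atTop (𝓝 (J₀:ℝ)) := by
    simp_rw [Finset.mul_sum]
    rw [hJ₀]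
    exact tendsto_finsetSum _ fun j _ => hq j
  have k3 : Tendsto (fun n : ℕ => (n:ℝ) * ∑ j, m n j * |f n j| ^ 3) atTop (𝓝 0) := by
    simp_rw [Finset.mul_sum]
    have := tendsto_finsetSum Finset.univ fun j _ => hq3 1 one_pos j
    simp only [Finset.sum_const_zero] at this
    refine this.congr fun n => Finset.sum_congr rfl fun j _ => ?_
    rw [← sq_abs (f n j)]; ring
  have L1 := tendsto_sum_gaussian m f (fun n j => (hm0 n j).le) hm1 0 J₀ k1 k2 k3 hb0 G
  have L2 := tendsto_sum_gaussian m (fun n j => f n j ^ 2) (fun n j => (hm0 n j).le) hm1 J₀ 0 k2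
    (by
      simp_rw [Finset.mul_sum]
      have := tendsto_finsetSum Finset.univ fun j _ => hq3 2 two_pos j
      simp only [Finset.sum_const_zero] at this
      refine this.congr fun n => Finset.sum_congr rfl fun j _ => ?_
      rw [sq_abs (f n j)]; ring)
    (by
      simp_rw [Finset.mul_sum]
      have := tendsto_finsetSum Finset.univ fun j _ => hq3 4 four_pos j
      simp only [Finset.sum_const_zero] at this
      refine this.congr fun n => Finset.sum_congr rfl fun j _ => ?_
      rw [← sq_abs (f n j), abs_of_nonneg (sq_nonneg |f n j|)]; ring)
    (fun j => by simpa using (hb0 j).pow 2) (penalty T J₀)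
  rw [gaussianReal_zero_var, integral_dirac, penalty_apply, sub_self, abs_zero, mul_zero,
    zero_div, neg_zero, Real.exp_zero, sub_self] at L2
  set β : ℕ → ℝ := fun n => T * ∑ j, |f n j| with hβ
  have hβ0 : Tendsto β atTop (𝓝 0) := by
    have := (tendsto_finsetSum Finset.univ fun j _ => (hb0 j).abs).const_mul T
    simpa using this
  have hβ3 : Tendsto (fun n : ℕ => (n:ℝ) * (2 * β n ^ 3)) atTop (𝓝 0) := by
    have h1 : Tendsto (fun n : ℕ => T * ∑ j, |a j / m n j|) atTop
        (𝓝 (T * ∑ j, |a j / mₒ j|)) :=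
      (tendsto_finsetSum Finset.univ fun j _ => (hr j).abs).const_mul T
    have h2 := ((h1.pow 3).const_mul 2).mul hsq
    rw [mul_zero] at h2
    refine h2.congr' ?_
    filter_upwards [eventually_ge_atTop 1] with n h1
    have h3 := hn n h1
    have : β n = (T * ∑ j, |a j / m n j|) * (√n)⁻¹ := by
      simp only [hβ, hf, abs_div _ (√(n:ℝ)), abs_of_pos h3]
      rw [← Finset.sum_div]; ring
    rw [this]
    nth_rw 2 [← hns n]
    field_simp
  have L : Tendsto (fun n : ℕ => 1 / (2 * T) * (exp (-(n * (2 * β n ^ 3))) *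
      (∑ y : Fin n → ι, (∏ i, m n (y i)) * G (∑ i, f n (y i)) -
        ‖G‖ * ∑ y : Fin n → ι, (∏ i, m n (y i)) * penalty T J₀ (∑ i, f n (y i) ^ 2)))) atTop
      (𝓝 (1 / (2 * T) * (1 * ((∫ x, G x ∂(gaussianReal 0 J₀)) - ‖G‖ * 0)))) := by
    refine Tendsto.const_mul _ (Tendsto.mul ?_ (L1.sub (L2.const_mul _)))
    have := (Real.continuous_exp.tendsto _).comp hβ3.neg
    simpa [Function.comp_def] using this
  rw [mul_zero, sub_zero, one_mul, hG, integral_smooth] at L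
  have hlt : b < 1 / (2 * T) * ∫ x, gcore (J₀ + η) R T u hJ hR x ∂(gaussianReal 0 (J₀ + η)) := by
    have h := gaussBound_le (T := T) (R := R) (u := u) (J := J₀ + η) (by simpa using hJ) hR hT
    simp only [NNReal.coe_add] at h
    exact hb.trans_le h
  filter_upwards [L.eventually (lt_mem_nhds hlt), hβ0.eventually (gt_mem_nhds
    (show (0:ℝ) < 1 / 2 by norm_num)), eventually_ge_atTop 1] with n hn1 hn2 hn3 c
  refine hn1.le.trans (mul_le_mul_of_nonneg_left ?_ (by positivity))
  have cint : ∀ y : Fin n → ι, Continuous fun t : ℝ =>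
      (∏ i, (m n (y i) + t * a (y i) / √n)) * |c y - t| ^ u := fun y =>
    (by fun_prop : Continuous fun t : ℝ => (∏ i, (m n (y i) + t * a (y i) / √n))).mul
      ((continuous_abs_rpow hu).comp (continuous_const.sub continuous_id))
  rw [intervalIntegral.integral_finsetSum fun y _ => (cint y).intervalIntegrable _ _,
    Finset.mul_sum, ← Finset.sum_sub_distrib, Finset.mul_sum]
  refine Finset.sum_le_sum fun y _ => ?_
  have key := finite_lower (fun j => (hm0 n j).le) hJ hR hT.le hu (β := β n) (f := f n)
    (fun j => mul_le_mul_of_nonneg_left (Finset.single_le_sum (f := fun j => |f n j|)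
      (fun j _ => abs_nonneg _) (Finset.mem_univ j)) hT.le) hn2.le y (c y)
  have e : ∀ t, ∏ i, (m n (y i) + t * a (y i) / √n) = ∏ i, (m n (y i) * (1 + t * f n (y i))) :=
    fun t => Finset.prod_congr rfl fun i _ => by
      have h3 := (hm0 n (y i)).ne'
      simp only [hf]
      field_simp
  simp_rw [e]
  refine le_trans (le_of_eq ?_) key
  ring

/-! ### The uniform prior and the geometry of its support -/

/-- Euclidean norm on `Fin k → ℝ`, whose Mathlib norm is the sup norm. -/
noncomputable def l2 {k : ℕ} (x : Fin k → ℝ) : ℝ := √(∑ i, x i ^ 2)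

lemma l2_eq_norm {k : ℕ} (x : Fin k → ℝ) : l2 x = ‖(WithLp.toLp 2 x : EuclideanSpace ℝ (Fin k))‖ := by
  rw [EuclideanSpace.norm_eq]; simp [l2]

lemma l2_add_le {k : ℕ} (x y : Fin k → ℝ) : l2 (x + y) ≤ l2 x + l2 y := by
  simp only [l2_eq_norm, WithLp.toLp_add]; exact norm_add_le _ _

lemma l2_smul {k : ℕ} (c : ℝ) (x : Fin k → ℝ) : l2 (c • x) = |c| * l2 x := by
  simp only [l2_eq_norm, WithLp.toLp_smul, norm_smul, Real.norm_eq_abs]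

lemma abs_le_l2 {k : ℕ} (x : Fin k → ℝ) (i : Fin k) : |x i| ≤ l2 x := by
  rw [← Real.sqrt_sq_eq_abs]
  exact Real.sqrt_le_sqrt
    (Finset.single_le_sum (f := fun i => x i ^ 2) (fun j _ => sq_nonneg _) (Finset.mem_univ i))

lemma continuous_l2 {k : ℕ} : Continuous (l2 (k := k)) := by unfold l2; fun_prop

/-- The uniform distribution as a point of `ℝ^k`. -/
noncomputable def unifPt (k : ℕ) : Fin k → ℝ := fun _ => 1 / (k:ℝ)

/-- Euclidean ball of radius `r` around the uniform distribution in the hyperplane `∑ p = 1`. -/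
def flatBall (k : ℕ) (r : ℝ) : Set (Fin k → ℝ) := {p | ∑ i, p i = 1 ∧ l2 (p - unifPt k) ≤ r}

lemma sum_unifPt {k : ℕ} (hk : 2 ≤ k) : ∑ i, unifPt k i = 1 := by
  have : (k:ℝ) ≠ 0 := by positivity
  simp [unifPt, this]

lemma Pball_subset (k : ℕ) (D : ℝ) (n : ℕ) : Pball k D n ⊆ flatBall k (D / √n) :=
  fun _ hp => ⟨hp.1.2, hp.2⟩

lemma Pball_eq {k : ℕ} {D : ℝ} {n : ℕ} (h : D / √n ≤ 1 / k) :
    Pball k D n = flatBall k (D / √n) := by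
  refine (Pball_subset k D n).antisymm fun p hp => ⟨⟨fun i => ?_, hp.1⟩, hp.2⟩
  have h1 := (abs_le_l2 (p - unifPt k) i).trans (hp.2.trans h)
  simp only [Pi.sub_apply, unifPt] at h1
  linarith [(abs_le.1 h1).1]

lemma isClosed_flatBall (k : ℕ) (r : ℝ) : IsClosed (flatBall k r) :=
  (isClosed_eq (by fun_prop) continuous_const).inter
    (isClosed_le (continuous_l2.comp (by fun_prop)) continuous_const)

lemma flatBall_shift {k : ℕ} {r r' s : ℝ} {w p : Fin k → ℝ} (hw : ∑ i, w i = 0)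
    (h : r' + |s| * l2 w ≤ r) (hp : p ∈ flatBall k r') : p + s • w ∈ flatBall k r := by
  refine ⟨?_, ?_⟩
  · simp [Finset.sum_add_distrib, ← Finset.mul_sum, hw, hp.1]
  · have := l2_add_le (p - unifPt k) (s • w)
    rw [l2_smul] at this
    rw [add_sub_right_comm]
    linarith [hp.2]

/-- Affine chart of the hyperplane `∑ p = 1`. -/
noncomputable def chart (m : ℕ) (x : Fin m → ℝ) : Fin (m + 1) → ℝ :=
  Fin.snoc (α := fun _ => ℝ) x (1 - ∑ i, x i)

lemma lipschitz_chart (m : ℕ) : LipschitzWith (m + 1 : ℝ≥0) (chart m) := by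
  refine LipschitzWith.of_dist_le_mul fun x y => ?_
  have h0 : (0:ℝ) ≤ dist x y := dist_nonneg
  have hm : (0:ℝ) ≤ m := m.cast_nonneg
  push_cast
  refine (dist_pi_le_iff (by positivity)).2 fun i => ?_
  refine Fin.lastCases ?_ (fun i => ?_) i
  · simp only [chart, Fin.snoc_last, Real.dist_eq]
    have : |1 - ∑ i, x i - (1 - ∑ i, y i)| ≤ ∑ i : Fin m, dist x y := by
      rw [show 1 - ∑ i, x i - (1 - ∑ i, y i) = ∑ i, (y i - x i) by
        rw [Finset.sum_sub_distrib]; ring]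
      refine (Finset.abs_sum_le_sum_abs _ _).trans (Finset.sum_le_sum fun i _ => ?_)
      rw [dist_comm, ← Real.dist_eq]; exact dist_le_pi_dist y x i
    rw [Finset.sum_const, Finset.card_univ, Fintype.card_fin, nsmul_eq_mul] at this
    linarith
  · simp only [chart, Fin.snoc_castSucc]
    have := dist_le_pi_dist x y i
    nlinarith

lemma lipschitz_init (m : ℕ) :
    LipschitzWith 1 (fun p : Fin (m + 1) → ℝ => fun i : Fin m => p i.castSucc) :=
  LipschitzWith.of_dist_le_mul fun x y => by
    simp only [NNReal.coe_one, one_mul]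
    exact (dist_pi_le_iff dist_nonneg).2 fun i => dist_le_pi_dist x y i.castSucc

lemma hausdorff_pi (m : ℕ) : (μH[(m:ℝ)] : Measure (Fin m → ℝ)) = volume := by
  have := hausdorffMeasure_pi_real (ι := Fin m)
  rwa [Fintype.card_fin] at this

lemma cast_sub_one {m : ℕ} : ((m + 1 : ℕ) : ℝ) - 1 = m := by push_cast; ring

/-- The ball lies in the Lipschitz image, under `chart`, of a bounded box of dimension `k - 1`. -/
lemma flatBall_lt_top {k : ℕ} (hk : 2 ≤ k) (r : ℝ) : μH[(k:ℝ) - 1] (flatBall k r) < ∞ := by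
  obtain ⟨m, rfl⟩ : ∃ m, k = m + 1 := ⟨k - 1, by omega⟩
  rw [cast_sub_one]
  set c : ℝ := 1 / ((m + 1 : ℕ) : ℝ) with hc
  have hsub : flatBall (m + 1) r ⊆ chart m '' Set.Icc (fun _ => c - r) (fun _ => c + r) := by
    intro p hp
    have hi : ∀ i, |p i - c| ≤ r := fun i => (abs_le_l2 (p - unifPt (m + 1)) i).trans hp.2
    refine ⟨fun i => p i.castSucc, ⟨fun i => ?_, fun i => ?_⟩, ?_⟩
    · have := (abs_le.1 (hi i.castSucc)).1; simp only; linarith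
    · have := (abs_le.1 (hi i.castSucc)).2; simp only; linarith
    · ext i
      refine Fin.lastCases ?_ (fun i => ?_) i
      · simp only [chart, Fin.snoc_last]
        have := hp.1
        rw [Fin.sum_univ_castSucc] at this
        linarith
      · simp [chart]
  refine (measure_mono hsub).trans_lt (((lipschitz_chart m).hausdorffMeasure_image_le
    m.cast_nonneg _).trans_lt ?_)
  rw [hausdorff_pi, Real.volume_Icc_pi]
  refine ENNReal.mul_lt_top (ENNReal.rpow_lt_top_of_nonneg m.cast_nonneg ENNReal.coe_ne_top) ?_
  exact ENNReal.prod_lt_top fun _ _ => ENNReal.ofReal_lt_top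

/-- Dropping the last coordinate is 1-Lipschitz and maps the ball onto a set containing a box. -/
lemma flatBall_pos {k : ℕ} (hk : 2 ≤ k) {r : ℝ} (hr : 0 < r) :
    0 < μH[(k:ℝ) - 1] (flatBall k r) := by
  obtain ⟨m, rfl⟩ : ∃ m, k = m + 1 := ⟨k - 1, by omega⟩
  rw [cast_sub_one]
  set c : ℝ := 1 / ((m + 1 : ℕ) : ℝ) with hc
  have hm : (0:ℝ) ≤ m := m.cast_nonneg
  set r' : ℝ := r / (m + 1) with hr'
  have hr0 : 0 < r' := by positivity
  have hsub : Set.Icc (fun _ => c - r') (fun _ => c + r') ⊆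
      (fun p : Fin (m + 1) → ℝ => fun i : Fin m => p i.castSucc) '' flatBall (m + 1) r := by
    intro x hx
    have hi : ∀ i, |x i - c| ≤ r' := fun i => abs_le.2
      ⟨by have := hx.1 i; simp only at this; linarith,
        by have := hx.2 i; simp only at this; linarith⟩
    refine ⟨chart m x, ⟨by simp [chart, Fin.sum_snoc], ?_⟩, by ext i; simp [chart]⟩
    refine Real.sqrt_le_iff.2 ⟨hr.le, ?_⟩
    rw [Fin.sum_univ_castSucc]
    simp only [Pi.sub_apply, chart, Fin.snoc_castSucc, Fin.snoc_last, unifPt]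
    rw [← hc]
    have h1 : ∑ i, (x i - c) ^ 2 ≤ m * r' ^ 2 := by
      have : ∑ i, (x i - c) ^ 2 ≤ ∑ i : Fin m, r' ^ 2 := Finset.sum_le_sum fun i _ => by
        rw [← sq_abs]; exact pow_le_pow_left₀ (abs_nonneg _) (hi i) 2
      simpa using this
    have h2 : |1 - ∑ i, x i - c| ≤ m * r' := by
      have e : 1 - ∑ i, x i - c = ∑ i, (c - x i) := by
        rw [Finset.sum_sub_distrib]
        simp only [Finset.sum_const, Finset.card_univ, Fintype.card_fin, nsmul_eq_mul]
        have : ((m:ℝ) + 1) * c = 1 := by rw [hc]; push_cast; field_simp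
        linarith
      rw [e]
      have : |∑ i, (c - x i)| ≤ ∑ i : Fin m, r' :=
        (Finset.abs_sum_le_sum_abs _ _).trans (Finset.sum_le_sum fun i _ => by
          rw [abs_sub_comm]; exact hi i)
      simpa using this
    have h3 : (1 - ∑ i, x i - c) ^ 2 ≤ (m * r') ^ 2 := by
      rw [← sq_abs]; exact pow_le_pow_left₀ (abs_nonneg _) h2 2
    have h4 : r = (m + 1) * r' := by rw [hr']; field_simp
    rw [h4]
    nlinarith [mul_nonneg hm (sq_nonneg r')]
  have h := (measure_mono hsub).trans ((lipschitz_init m).hausdorffMeasure_image_le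
    m.cast_nonneg (flatBall (m + 1) r))
  rw [hausdorff_pi, Real.volume_Icc_pi] at h
  simp only [ENNReal.coe_one, ENNReal.one_rpow, one_mul] at h
  refine lt_of_lt_of_le ?_ h
  rw [pos_iff_ne_zero, Finset.prod_ne_zero_iff]
  intro i _
  simp only [ne_eq, ENNReal.ofReal_eq_zero, not_le]
  linarith

lemma flatBall_scale {k : ℕ} (hk : 2 ≤ k) {c : ℝ} (hc : 0 < c) (r : ℝ) :
    μH[(k:ℝ) - 1] (flatBall k (c * r)) = ENNReal.ofReal (c ^ ((k:ℝ) - 1)) *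
      μH[(k:ℝ) - 1] (flatBall k r) := by
  have hk1 : (0:ℝ) ≤ (k:ℝ) - 1 := by
    have : (2:ℝ) ≤ k := by exact_mod_cast hk
    linarith
  have e : flatBall k (c * r) = AffineMap.homothety (unifPt k) c '' flatBall k r := by
    have hU := sum_unifPt hk
    have hh : ∀ p, AffineMap.homothety (unifPt k) c p = c • (p - unifPt k) + unifPt k := fun p => by
      simp [AffineMap.homothety_apply]
    have hs : ∀ (p : Fin k → ℝ), ∑ i, p i = 1 → ∀ c : ℝ,
        ∑ i, (c • (p - unifPt k) + unifPt k) i = 1 := fun p hp c => by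
      simp only [Pi.add_apply, Pi.smul_apply, Pi.sub_apply, smul_eq_mul, Finset.sum_add_distrib,
        ← Finset.mul_sum, Finset.sum_sub_distrib, hp, hU]
      ring
    ext p
    constructor
    · rintro ⟨h1, h2⟩
      refine ⟨c⁻¹ • (p - unifPt k) + unifPt k, ⟨hs p h1 _, ?_⟩, ?_⟩
      · rw [add_sub_cancel_right, l2_smul, abs_of_pos (inv_pos.2 hc), inv_mul_le_iff₀ hc]
        exact h2
      · rw [hh, add_sub_cancel_right, smul_smul, mul_inv_cancel₀ hc.ne', one_smul, sub_add_cancel]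
    · rintro ⟨p', ⟨h1, h2⟩, rfl⟩
      rw [hh]
      refine ⟨hs p' h1 _, ?_⟩
      rw [add_sub_cancel_right, l2_smul, abs_of_pos hc]
      exact mul_le_mul_of_nonneg_left h2 hc.le
  rw [e, hausdorffMeasure_homothety_image hk1 _ hc.ne', ENNReal.smul_def, smul_eq_mul]
  congr 1
  rw [← NNReal.coe_inj.1 (show (((Real.toNNReal (c ^ ((k:ℝ) - 1))) : ℝ≥0) : ℝ) =
    ((‖c‖₊ ^ ((k:ℝ) - 1) : ℝ≥0) : ℝ) by
      rw [Real.coe_toNNReal _ (by positivity), NNReal.coe_rpow, coe_nnnorm,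
        Real.norm_of_nonneg hc.le])]
  rfl

/-- Replacing the uniform prior on a ball by the uniform prior on segments in direction `w`,
at the price of shrinking the ball. -/
lemma lintegral_flatBall_ge {k : ℕ} (hk : 2 ≤ k) {r c T h : ℝ} {w : Fin k → ℝ} (hc : 0 < c)
    (hr : 0 < r) (hT : 0 < T) (hw : ∑ i, w i = 0)
    (hs : ∀ s, |s| ≤ T → c * r + |s * h| * l2 w ≤ r) {f : (Fin k → ℝ) → ℝ≥0∞}
    (hf : Measurable f) {b : ℝ≥0∞}
    (hb : ∀ p ∈ flatBall k (c * r),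
      b ≤ ENNReal.ofReal (1 / (2 * T)) * ∫⁻ s in Set.Ioc (-T) T, f (p + (s * h) • w)) :
    ENNReal.ofReal (c ^ ((k:ℝ) - 1)) * b ≤
      (μH[(k:ℝ) - 1] (flatBall k r))⁻¹ * ∫⁻ p in flatBall k r, f p ∂μH[(k:ℝ) - 1] := by
  set μ : Measure (Fin k → ℝ) := μH[(k:ℝ) - 1] with hμ
  have hfin := flatBall_lt_top hk r
  have hpos := flatBall_pos hk hr
  have hmeas : ∀ r, MeasurableSet (flatBall k r) := fun r => (isClosed_flatBall k r).measurableSet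
  have : IsFiniteMeasure (μ.restrict (flatBall k (c * r))) :=
    ⟨by rw [Measure.restrict_apply_univ]; exact flatBall_lt_top hk _⟩
  have hsh : ∀ s ∈ Set.Ioc (-T) T, ∫⁻ p in flatBall k (c * r), f (p + (s * h) • w) ∂μ ≤
      ∫⁻ p in flatBall k r, f p ∂μ := by
    intro s hs'
    rw [← lintegral_indicator (hmeas _), ← lintegral_indicator (hmeas _),
      ← lintegral_add_right_eq_self (μ := μ) ((flatBall k r).indicator f) ((s * h) • w)]
    refine lintegral_mono fun p => ?_
    by_cases hp : p ∈ flatBall k (c * r)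
    · rw [Set.indicator_of_mem hp, Set.indicator_of_mem
        (flatBall_shift hw (hs s (abs_le.2 ⟨hs'.1.le, hs'.2⟩)) hp)]
    · rw [Set.indicator_of_notMem hp]; exact zero_le
  have havg : ∫⁻ s in Set.Ioc (-T) T, ∫⁻ p in flatBall k (c * r), f (p + (s * h) • w) ∂μ ≤
      ENNReal.ofReal (2 * T) * ∫⁻ p in flatBall k r, f p ∂μ := by
    refine (setLIntegral_mono measurable_const hsh).trans (le_of_eq ?_)
    rw [setLIntegral_const, Real.volume_Ioc, mul_comm]
    congr 2; ring
  rw [lintegral_lintegral_swap (by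
    refine (hf.comp ?_).aemeasurable
    exact Continuous.measurable (by fun_prop : Continuous fun q : ℝ × (Fin k → ℝ) =>
      q.2 + (q.1 * h) • w))] at havg
  have hlow : b * μ (flatBall k (c * r)) ≤ ENNReal.ofReal (1 / (2 * T)) *
      ∫⁻ p in flatBall k (c * r), (∫⁻ s in Set.Ioc (-T) T, f (p + (s * h) • w)) ∂μ := by
    rw [← lintegral_const_mul' _ _ ENNReal.ofReal_ne_top, ← setLIntegral_const]
    exact setLIntegral_mono' (hmeas _) hb
  have hmain : b * μ (flatBall k (c * r)) ≤ ∫⁻ p in flatBall k r, f p ∂μ := by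
    refine hlow.trans ((mul_le_mul_right havg _).trans (le_of_eq ?_))
    rw [← mul_assoc, ← ENNReal.ofReal_mul (by positivity), one_div_mul_cancel (by positivity),
      ENNReal.ofReal_one, one_mul]
  rw [flatBall_scale hk hc] at hmain
  calc ENNReal.ofReal (c ^ ((k:ℝ) - 1)) * b
      = (μ (flatBall k r))⁻¹ * (b * (ENNReal.ofReal (c ^ ((k:ℝ) - 1)) * μ (flatBall k r))) := by
        rw [← mul_assoc b, mul_comm _ (μ (flatBall k r)), ← mul_assoc,
          ENNReal.inv_mul_cancel hpos.ne' hfin.ne, one_mul, mul_comm]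
    _ ≤ _ := mul_le_mul_right hmain _

/-! ### Fisher information of extremal schemes -/

/-- Jensen's inequality for the decreasing convex function `x ↦ x ^ (-p)`. -/
lemma sum_rpow_neg_ge {k : ℕ} {x : Fin k → ℝ} (hx : ∀ i, 0 < x i) {A p : ℝ} (hA : 0 < A)
    (hp : 0 ≤ p) (hsum : ∑ i, x i ≤ k * A) : k * A ^ (-p) ≤ ∑ i, x i ^ (-p) := by
  have h1 : ∀ i, A ^ (-p) * (1 + p * (1 - x i / A)) ≤ x i ^ (-p) := by
    intro i
    have hy : 0 < x i / A := div_pos (hx i) hA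
    have e : x i ^ (-p) = A ^ (-p) * (x i / A) ^ (-p) := by
      rw [← Real.mul_rpow hA.le hy.le, mul_div_cancel₀ _ hA.ne']
    rw [e]
    refine mul_le_mul_of_nonneg_left ?_ (by positivity)
    rw [Real.rpow_def_of_pos hy]
    have h2 := Real.add_one_le_exp (log (x i / A) * -p)
    have h3 := Real.log_le_sub_one_of_pos hy
    nlinarith
  have h2 := Finset.sum_le_sum fun i (_ : i ∈ Finset.univ) => h1 i
  refine le_trans ?_ h2
  rw [← Finset.mul_sum, Finset.sum_add_distrib, ← Finset.mul_sum, Finset.sum_sub_distrib,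
    ← Finset.sum_div]
  simp only [Finset.sum_const, Finset.card_univ, Fintype.card_fin, nsmul_eq_mul, mul_one]
  have h3 : (∑ i, x i) / A ≤ k := by rwa [div_le_iff₀ hA]
  rw [mul_comm]
  refine mul_le_mul_of_nonneg_left ?_ (by positivity)
  nlinarith

/-- The smallest entry of a row is positive: division by zero would make every ratio `0`, which is
neither `1` nor `e^ε`. -/
lemma memDEE_inf_pos {k L : ℕ} (hk : 2 ≤ k) {ε : ℝ} {q : Fin L → Fin k → ℝ}
    (hq : memDEE k L ε q) (j : Fin L) :
    ∃ v₀, (⨅ v, q j v) = q j v₀ ∧ 0 < q j v₀ ∧ ∀ v, q j v₀ ≤ q j v := by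
  have : Nonempty (Fin k) := ⟨⟨0, by omega⟩⟩
  obtain ⟨v₀, hv₀⟩ := exists_eq_ciInf_of_finite (f := q j)
  refine ⟨v₀, hv₀.symm, ?_, fun v => ?_⟩
  · refine lt_of_le_of_ne (hq.1 j v₀) fun h0 => ?_
    have h := hq.2.2.2 j v₀
    rw [← hv₀, ← h0, div_zero] at h
    rcases h with h | h
    · exact zero_ne_one h
    · exact (exp_pos ε).ne h
  · rw [hv₀]; exact ciInf_le (Set.finite_range _).bddBelow v

lemma memDEE_pos {k L : ℕ} (hk : 2 ≤ k) {ε : ℝ} {q : Fin L → Fin k → ℝ}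
    (hq : memDEE k L ε q) (j : Fin L) (v : Fin k) : 0 < q j v := by
  obtain ⟨v₀, _, h2, h3⟩ := memDEE_inf_pos hk hq j
  exact h2.trans_le (h3 v)

lemma qrow_pos {k L : ℕ} (hk : 2 ≤ k) {ε : ℝ} {q : Fin L → Fin k → ℝ}
    (hq : memDEE k L ε q) (j : Fin L) : 0 < qrow q j := by
  have : Nonempty (Fin k) := ⟨⟨0, by omega⟩⟩
  have : (0:ℝ) < k := by positivity
  exact mul_pos (by positivity)
    (Finset.sum_pos (fun v _ => memDEE_pos hk hq j v) Finset.univ_nonempty)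

lemma qrow_sum {k L : ℕ} (hk : 2 ≤ k) {ε : ℝ} {q : Fin L → Fin k → ℝ}
    (hq : memDEE k L ε q) : ∑ j, qrow q j = 1 := by
  have : (k:ℝ) ≠ 0 := by positivity
  simp only [qrow]
  rw [← Finset.mul_sum, Finset.sum_comm]
  simp [hq.2.1, this]

lemma gfun_pos {k d : ℕ} {ε : ℝ} (h1 : 1 ≤ d) (h2 : d ≤ k - 1) : 0 < gfun ε k d := by
  have hd : (1:ℝ) ≤ d := by exact_mod_cast h1
  have hkd : (0:ℝ) < (k:ℝ) - d := by
    have : (d:ℝ) < k := by exact_mod_cast (by omega : d < k)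
    linarith
  have := exp_pos ε
  unfold gfun
  have : (0:ℝ) < d * exp ε + k - d := by nlinarith [mul_pos (by linarith : (0:ℝ) < d) this]
  positivity

/-- Chi-square spread of one row of the scheme; a row with `d` large entries contributes
`k (e^ε - 1)² / g(d)`, which is at most the value at the minimizer `d*` of `g`. -/
lemma row_bound {k L : ℕ} (hk : 2 ≤ k) {ε : ℝ} (hε : 0 < ε) {q : Fin L → Fin k → ℝ}
    (hq : memDEE k L ε q) {dstar : ℕ} (hd : IsOptDstar k ε dstar) (j : Fin L) :
    (∑ i, (q j i - qrow q j) ^ 2) / qrow q j ≤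
      qrow q j * (k * (exp ε - 1) ^ 2 / gfun ε k dstar) := by
  obtain ⟨v₀, h1, hc, _⟩ := memDEE_inf_pos hk hq j
  have hkpos : (0:ℝ) < k := by positivity
  have hE : 1 < exp ε := Real.one_lt_exp_iff.2 hε
  set c := q j v₀ with hcdef
  set E := exp ε with hEdef
  set S := Finset.univ.filter fun v => q j v = c * E with hS
  have hrow : ∀ v, q j v = if v ∈ S then c * E else c := by
    intro v
    by_cases hv : v ∈ S
    · rw [if_pos hv]; exact (Finset.mem_filter.1 hv).2
    · rw [if_neg hv]
      have h := hq.2.2.2 j v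
      rw [h1] at h
      rcases h with h | h
      · rwa [div_eq_one_iff_eq hc.ne'] at h
      · exfalso
        rw [Set.mem_singleton_iff, div_eq_iff hc.ne'] at h
        exact hv (Finset.mem_filter.2 ⟨Finset.mem_univ _, by rw [h, mul_comm]⟩)
  have hsumf : ∀ F : ℝ → ℝ, ∑ v, F (q j v) = S.card * F (c * E) + ((k:ℝ) - S.card) * F c := by
    intro F
    have e : ∀ v, F (q j v) = F c + if v ∈ S then F (c * E) - F c else 0 := fun v => by
      rw [hrow v]; split_ifs <;> ring
    simp_rw [e]
    rw [Finset.sum_add_distrib, Finset.sum_ite_mem, Finset.univ_inter]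
    simp only [Finset.sum_const, Finset.card_univ, Fintype.card_fin, nsmul_eq_mul]
    ring
  have hcard : S.card ≤ k - 1 := by
    have hv : v₀ ∉ S := fun h => by
      have h2 := (Finset.mem_filter.1 h).2
      rw [← hcdef] at h2
      nlinarith
    have := Finset.card_lt_univ_of_notMem hv
    rw [Fintype.card_fin] at this
    omega
  set d := S.card with hdd
  have hqr : qrow q j = c * (d * E + k - d) / k := by
    have hs := hsumf id
    simp only [id] at hs
    unfold qrow
    rw [hs]
    field_simp
    ring
  have hvar : ∑ i, (q j i - qrow q j) ^ 2 = c ^ 2 * (d * (k - d) * (E - 1) ^ 2) / k := by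
    rw [hsumf fun x => (x - qrow q j) ^ 2, hqr]
    field_simp
    ring
  have hgs := gfun_pos (ε := ε) (Finset.mem_Icc.1 hd.1).1 (Finset.mem_Icc.1 hd.1).2
  have hqp := qrow_pos hk hq j
  rcases Nat.eq_zero_or_pos d with h0 | h0
  · rw [hvar, h0]
    simp only [Nat.cast_zero, zero_mul, mul_zero, zero_div]
    positivity
  · have hgd := gfun_pos (ε := ε) h0 hcard
    have hle := hd.2 d (Finset.mem_Icc.2 ⟨h0, hcard⟩)
    have e : (∑ i, (q j i - qrow q j) ^ 2) / qrow q j =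
        qrow q j * (k * (E - 1) ^ 2 / gfun ε k d) := by
      have hd1 : (1:ℝ) ≤ d := by exact_mod_cast h0
      have hkd : (0:ℝ) < (k:ℝ) - d := by
        have : (d:ℝ) < k := by exact_mod_cast (by omega : d < k)
        linarith
      have hpos : (0:ℝ) < d * E + k - d := by nlinarith
      rw [hvar, gfun, ← hEdef, hqr]
      field_simp
    rw [e]
    gcongr

/-- The direction in the hyperplane `∑ w = 0` with `w i = 1` of least Euclidean norm. -/
noncomputable def dir (k : ℕ) (i : Fin k) : Fin k → ℝ :=
  fun v => (k:ℝ) / ((k:ℝ) - 1) * ((if v = i then 1 else 0) - 1 / (k:ℝ))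

/-- Derivative of the output distribution along `dir k i`. -/
noncomputable def outSlope {k L : ℕ} (q : Fin L → Fin k → ℝ) (i : Fin k) (j : Fin L) : ℝ :=
  ∑ v, dir k i v * q j v

/-- Fisher outInformation of the output about the `i`-th coordinate at the uniform distribution. -/
noncomputable def outInfo {k L : ℕ} (q : Fin L → Fin k → ℝ) (i : Fin k) : ℝ :=
  ∑ j, outSlope q i j ^ 2 / qrow q j

lemma outSlope_eq {k L : ℕ} (q : Fin L → Fin k → ℝ) (i : Fin k) (j : Fin L) :
    outSlope q i j = (k:ℝ) / ((k:ℝ) - 1) * (q j i - qrow q j) := by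
  simp only [outSlope, dir, qrow, mul_assoc, sub_mul]
  rw [← Finset.mul_sum, Finset.sum_sub_distrib, ← Finset.mul_sum]
  simp

lemma cast_sub_pos {k : ℕ} (hk : 2 ≤ k) : (0:ℝ) < (k:ℝ) - 1 := by
  have : (2:ℝ) ≤ k := by exact_mod_cast hk
  linarith

lemma dir_sum {k : ℕ} (hk : 2 ≤ k) (i : Fin k) : ∑ v, dir k i v = 0 := by
  have : (k:ℝ) ≠ 0 := by positivity
  simp only [dir]
  rw [← Finset.mul_sum, Finset.sum_sub_distrib]
  simp [this]

lemma dir_self {k : ℕ} (hk : 2 ≤ k) (i : Fin k) : dir k i i = 1 := by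
  have : (k:ℝ) ≠ 0 := by positivity
  have := (cast_sub_pos hk).ne'
  simp only [dir, if_true]
  field_simp

lemma l2_dir_le {k : ℕ} (hk : 2 ≤ k) (i : Fin k) : l2 (dir k i) ≤ 2 := by
  have h2 : (2:ℝ) ≤ k := by exact_mod_cast hk
  have h1 := cast_sub_pos hk
  refine Real.sqrt_le_iff.2 ⟨by norm_num, ?_⟩
  have e : ∀ v, dir k i v ^ 2 = ((k:ℝ) / ((k:ℝ) - 1)) ^ 2 *
      ((if v = i then 1 - 2 / (k:ℝ) else 0) + 1 / (k:ℝ) ^ 2) := fun v => by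
    simp only [dir]; split_ifs <;> ring
  simp_rw [e]
  rw [← Finset.mul_sum, Finset.sum_add_distrib]
  simp only [Finset.sum_ite_eq', Finset.mem_univ, if_true, Finset.sum_const, Finset.card_univ,
    Fintype.card_fin, nsmul_eq_mul]
  have : ((k:ℝ) / ((k:ℝ) - 1)) ^ 2 * (1 - 2 / (k:ℝ) + k * (1 / (k:ℝ) ^ 2)) = k / (k - 1) := by
    field_simp
    ring
  rw [this, div_le_iff₀ h1]
  linarith

lemma outSlope_sum {k L : ℕ} (hk : 2 ≤ k) {ε : ℝ} {q : Fin L → Fin k → ℝ}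
    (hq : memDEE k L ε q) (i : Fin k) : ∑ j, outSlope q i j = 0 := by
  simp_rw [outSlope_eq]
  rw [← Finset.mul_sum, Finset.sum_sub_distrib, hq.2.1, qrow_sum hk hq, sub_self, mul_zero]

lemma outInfo_nonneg {k L : ℕ} (hk : 2 ≤ k) {ε : ℝ} {q : Fin L → Fin k → ℝ}
    (hq : memDEE k L ε q) (i : Fin k) : 0 ≤ outInfo q i :=
  Finset.sum_nonneg fun j _ => div_nonneg (sq_nonneg _) (qrow_pos hk hq j).le

lemma Mconst_pos {k : ℕ} (hk : 2 ≤ k) {ε : ℝ} (hε : 0 < ε) {dstar : ℕ}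
    (hd : IsOptDstar k ε dstar) : 0 < Mconst k ε dstar := by
  have hgs := gfun_pos (ε := ε) (Finset.mem_Icc.1 hd.1).1 (Finset.mem_Icc.1 hd.1).2
  have hE : 0 < exp ε - 1 := sub_pos.2 (Real.one_lt_exp_iff.2 hε)
  have := cast_sub_pos hk
  have : (0:ℝ) < k := by positivity
  unfold Mconst
  positivity

/-- Trace bound: the total information about the coordinates is at most `k / M(k, ε)`. -/
lemma outInfo_sum_le {k L : ℕ} (hk : 2 ≤ k) {ε : ℝ} (hε : 0 < ε) {q : Fin L → Fin k → ℝ}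
    (hq : memDEE k L ε q) {dstar : ℕ} (hd : IsOptDstar k ε dstar) :
    ∑ i, outInfo q i ≤ k * (1 / Mconst k ε dstar) := by
  have hgs := gfun_pos (ε := ε) (Finset.mem_Icc.1 hd.1).1 (Finset.mem_Icc.1 hd.1).2
  have hE : 0 < exp ε - 1 := sub_pos.2 (Real.one_lt_exp_iff.2 hε)
  have hk1 := cast_sub_pos hk
  have hk0 : (0:ℝ) < k := by positivity
  have e : ∑ i, outInfo q i = ((k:ℝ) / ((k:ℝ) - 1)) ^ 2 *
      ∑ j, (∑ i, (q j i - qrow q j) ^ 2) / qrow q j := by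
    simp only [outInfo, outSlope_eq]
    rw [Finset.sum_comm, Finset.mul_sum]
    refine Finset.sum_congr rfl fun j _ => ?_
    rw [Finset.sum_div, Finset.mul_sum]
    refine Finset.sum_congr rfl fun i _ => ?_
    ring
  rw [e]
  calc _ ≤ ((k:ℝ) / ((k:ℝ) - 1)) ^ 2 *
        ∑ j, qrow q j * (k * (exp ε - 1) ^ 2 / gfun ε k dstar) := by
        gcongr with j
        exact row_bound hk hε hq hd j
    _ = k * (1 / Mconst k ε dstar) := by
        rw [← Finset.sum_mul, qrow_sum hk hq, one_mul, Mconst]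
        field_simp

/-! ### Bayes risk: from segments to the full prior -/

lemma unifPt_mem {k : ℕ} (hk : 2 ≤ k) {D : ℝ} (hD : 0 ≤ D) (n : ℕ) : unifPt k ∈ Pball k D n := by
  refine ⟨⟨fun i => by unfold unifPt; positivity, sum_unifPt hk⟩, ?_⟩
  simp only [unifPt, sub_self]
  simp
  positivity

/-- The lower bound along one segment, uniformly over its centre `p` in the prior's support:
otherwise violating centres would form a sequence tending to the uniform distribution. -/
lemma core_uniform {k L : ℕ} (hk : 2 ≤ k) {ε : ℝ} {q : Fin L → Fin k → ℝ}
    (hq : memDEE k L ε q) (i : Fin k) {η : ℝ≥0} (hη : 0 < η) {T R u D : ℝ} (hT : 0 < T)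
    (hR : 0 ≤ R) (hu : 1 ≤ u) (hD : 0 ≤ D) {b : ℝ}
    (hb : b < gaussBound T R (outInfo q i + η) u) :
    ∀ᶠ n : ℕ in atTop, ∀ p ∈ Pball k D n, ∀ c : (Fin n → Fin L) → ℝ,
      b ≤ 1 / (2 * T) * ∫ t in (-T)..T, ∑ y : Fin n → Fin L,
        (∏ l, (∑ v, p v * q (y l) v + t * outSlope q i (y l) / √n)) * |c y - t| ^ u := by
  classical
  set A : (n : ℕ) → (Fin k → ℝ) → Prop := fun n p => ∀ c : (Fin n → Fin L) → ℝ,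
      b ≤ 1 / (2 * T) * ∫ t in (-T)..T, ∑ y : Fin n → Fin L,
        (∏ l, (∑ v, p v * q (y l) v + t * outSlope q i (y l) / √n)) * |c y - t| ^ u with hA
  -- A centre violating the bound if there is one, and the uniform distribution otherwise.
  have hex : ∀ n, ∃ p ∈ Pball k D n, A n p → ∀ p' ∈ Pball k D n, A n p' := by
    intro n
    by_cases h : ∀ p' ∈ Pball k D n, A n p'
    · exact ⟨unifPt k, unifPt_mem hk hD n, fun _ => h⟩
    · push Not at h
      obtain ⟨p, hp, hp'⟩ := h
      exact ⟨p, hp, fun h' => absurd h' hp'⟩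
  choose p hp hpA using hex
  have hk0 : (k:ℝ) ≠ 0 := by positivity
  have hlimp : ∀ v, Tendsto (fun n => p n v) atTop (𝓝 (1 / (k:ℝ))) := by
    intro v
    have hz : Tendsto (fun n : ℕ => D / √(n:ℝ)) atTop (𝓝 0) :=
      (Real.tendsto_sqrt_atTop.comp tendsto_natCast_atTop_atTop).const_div_atTop D
    rw [tendsto_iff_dist_tendsto_zero]
    refine squeeze_zero (fun _ => dist_nonneg) (fun n => ?_) hz
    exact (abs_le_l2 (p n - unifPt k) v).trans (hp n).2
  have h := core_eventually (m := fun n j => ∑ v, p n v * q j v) (mₒ := qrow q)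
    (a := outSlope q i) (J₀ := ⟨outInfo q i, outInfo_nonneg hk hq i⟩) (η := η) (T := T) (R := R)
    (u := u) (b := b) ?_ ?_ (qrow_pos hk hq) ?_ (outSlope_sum hk hq i) rfl hη hT hR hu hb
  · filter_upwards [h] with n hn
    exact hpA n hn
  · intro n j
    obtain ⟨v₀, -, h2, h3⟩ := memDEE_inf_pos hk hq j
    calc 0 < q j v₀ := h2
      _ = ∑ v, p n v * q j v₀ := by rw [← Finset.sum_mul, (hp n).1.2, one_mul]
      _ ≤ _ := Finset.sum_le_sum fun v _ => mul_le_mul_of_nonneg_left (h3 v) ((hp n).1.1 v)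
  · intro n
    rw [Finset.sum_comm]
    simp_rw [← Finset.mul_sum, hq.2.1, mul_one]
    exact (hp n).1.2
  · intro j
    have : qrow q j = ∑ v, 1 / (k:ℝ) * q j v := by rw [qrow, Finset.mul_sum]
    rw [this]
    exact tendsto_finsetSum _ fun v _ => (hlimp v).mul_const _

/-- Lower bound for one component of the rescaled Bayes risk: rescaling the estimation error by `√n`
turns the loss along each segment into the one-dimensional loss bounded in `core_uniform`. -/
lemma bayesRisk_eventually {k L : ℕ} (hk : 2 ≤ k) {ε : ℝ} {q : Fin L → Fin k → ℝ}
    (hq : memDEE k L ε q) (i : Fin k) {η : ℝ≥0} (hη : 0 < η) {T R u D : ℝ} (hT : 0 < T)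
    (hR : 0 ≤ R) (hu : 1 ≤ u) (hD : 2 * T < D) {b : ℝ}
    (hb : b < gaussBound T R (outInfo q i + η) u) :
    ∀ᶠ n : ℕ in atTop, ENNReal.ofReal (((D - 2 * T) / D) ^ ((k:ℝ) - 1)) * ENNReal.ofReal b ≤
      (n : ℝ≥0∞) ^ (u / 2) * bayesRisk k L u q D n i := by
  have hD0 : 0 < D := by linarith
  have hk0 : (0:ℝ) < k := by positivity
  have hz : Tendsto (fun n : ℕ => D / √(n:ℝ)) atTop (𝓝 0) :=
    (Real.tendsto_sqrt_atTop.comp tendsto_natCast_atTop_atTop).const_div_atTop D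
  filter_upwards [core_uniform hk hq i hη hT hR hu hD0.le hb, eventually_ge_atTop 1,
    hz.eventually (gt_mem_nhds (show (0:ℝ) < 1 / k by positivity))] with n hn hn1 hn2
  have hn0 : (0:ℝ) < n := by exact_mod_cast hn1
  have hsq : 0 < √(n:ℝ) := Real.sqrt_pos.2 hn0
  set c := (D - 2 * T) / D with hc
  have hc0 : 0 < c := div_pos (by linarith) hD0
  set r := D / √(n:ℝ) with hr
  have hr0 : 0 < r := by positivity
  have hP : Pball k D n = flatBall k r := Pball_eq hn2.le
  set N : ℝ := (n:ℝ) ^ (-(u / 2)) with hN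
  have hN0 : 0 < N := by positivity
  have hNabs : ∀ x : ℝ, |x / √n| ^ u = N * |x| ^ u := fun x => by
    rw [abs_div, abs_of_pos hsq, Real.div_rpow (abs_nonneg _) hsq.le, Real.sqrt_eq_rpow,
      ← Real.rpow_mul hn0.le, hN, Real.rpow_neg hn0.le]
    rw [show 1 / 2 * u = u / 2 by ring]
    ring
  have hsegm : ∀ s, |s| ≤ T → c * r + |s * (√n)⁻¹| * l2 (dir k i) ≤ r := by
    intro s hs
    have e : c * r = r - 2 * T * (√n)⁻¹ := by rw [hc, hr]; field_simp
    have h1 : |s * (√n)⁻¹| * l2 (dir k i) ≤ (T * (√n)⁻¹) * 2 := by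
      rw [abs_mul, abs_of_pos (inv_pos.2 hsq)]
      exact mul_le_mul (by gcongr) (l2_dir_le hk i) (Real.sqrt_nonneg _) (by positivity)
    linarith
  have key : ENNReal.ofReal (c ^ ((k:ℝ) - 1)) * ENNReal.ofReal (N * b) ≤
      bayesRisk k L u q D n i := by
    refine le_iInf fun est => ?_
    rw [unifP, lintegral_smul_measure, smul_eq_mul, hP]
    refine lintegral_flatBall_ge hk hc0 hr0 hT (dir_sum hk i) hsegm ?_ fun p hp => ?_
    · refine Finset.measurable_sum _ fun y _ => Measurable.mul ?_ ?_
      · refine Finset.measurable_prod _ fun l _ => ENNReal.measurable_ofReal.comp ?_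
        exact Continuous.measurable (by fun_prop)
      · refine ENNReal.measurable_ofReal.comp (Measurable.pow_const ?_ u)
        exact Continuous.measurable (by fun_prop)
    · have hpP : p ∈ Pball k D n := by
        rw [hP]
        have := flatBall_shift (dir_sum hk i) (hsegm 0 (by simpa using hT.le)) hp
        simpa using this
      set C : (Fin n → Fin L) → ℝ := fun y => √n * (est y - p i) with hC
      have h := hn p hpP C
      set F : ℝ → ℝ := fun t => ∑ y : Fin n → Fin L,
        (∏ l, (∑ v, p v * q (y l) v + t * outSlope q i (y l) / √n)) * |C y - t| ^ u with hF
      have cF : Continuous F := continuous_finsetSum _ fun y _ =>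
        (by fun_prop : Continuous fun t : ℝ =>
          ∏ l, (∑ v, p v * q (y l) v + t * outSlope q i (y l) / √n)).mul
          ((continuous_abs_rpow hu).comp (continuous_const.sub continuous_id))
      have hpos : ∀ s, |s| ≤ T → ∀ j,
          0 ≤ ∑ v, p v * q j v + s * outSlope q i j / √n ∧
          ∑ v, (p + (s * (√n)⁻¹) • dir k i) v * q j v =
            ∑ v, p v * q j v + s * outSlope q i j / √n := by
        intro s hs j
        have hmem := flatBall_shift (dir_sum hk i) (hsegm s hs) hp
        rw [← hP] at hmem
        have e : ∑ v, (p + (s * (√n)⁻¹) • dir k i) v * q j v =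
            ∑ v, p v * q j v + s * outSlope q i j / √n := by
          simp only [Pi.add_apply, Pi.smul_apply, smul_eq_mul, add_mul, Finset.sum_add_distrib,
            outSlope, mul_assoc, ← Finset.mul_sum]
          ring
        refine ⟨?_, e⟩
        rw [← e]
        exact Finset.sum_nonneg fun v _ => mul_nonneg (hmem.1.1 v) (hq.1 j v)
      have hFpos : ∀ s, |s| ≤ T → 0 ≤ F s := fun s hs => Finset.sum_nonneg fun y _ =>
        mul_nonneg (Finset.prod_nonneg fun l _ => (hpos s hs (y l)).1) (by positivity)
      have hmemT : ∀ s ∈ Set.Ioc (-T) T, |s| ≤ T := fun s hs => abs_le.2 ⟨hs.1.le, hs.2⟩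
      have hfe : ∀ s ∈ Set.Ioc (-T) T,
          (∑ y : Fin n → Fin L,
            (∏ l, ENNReal.ofReal (∑ v, (p + (s * (√n)⁻¹) • dir k i) v * q (y l) v)) *
            ENNReal.ofReal (|est y - (p + (s * (√n)⁻¹) • dir k i) i| ^ u)) =
          ENNReal.ofReal (N * F s) := by
        intro s hs
        have hs' := hmemT s hs
        rw [hF, Finset.mul_sum, ENNReal.ofReal_sum_of_nonneg fun y _ => mul_nonneg hN0.le
          (mul_nonneg (Finset.prod_nonneg fun l _ => (hpos s hs' (y l)).1) (by positivity))]
        refine Finset.sum_congr rfl fun y _ => ?_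
        rw [mul_left_comm, ENNReal.ofReal_mul
          (Finset.prod_nonneg fun l _ => (hpos s hs' (y l)).1),
          ENNReal.ofReal_prod_of_nonneg fun l _ => (hpos s hs' (y l)).1]
        congr 1
        · exact Finset.prod_congr rfl fun l _ => by rw [(hpos s hs' (y l)).2]
        · rw [← hNabs]
          congr 3
          simp only [Pi.add_apply, Pi.smul_apply, smul_eq_mul, dir_self hk i, hC]
          field_simp
          ring
      rw [setLIntegral_congr_fun measurableSet_Ioc hfe,
        ← ofReal_integral_eq_lintegral_ofReal
          ((intervalIntegrable_iff_integrableOn_Ioc_of_le (by linarith)).1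
            ((by fun_prop : Continuous fun s => N * F s).intervalIntegrable (-T) T))
          ((ae_restrict_iff' measurableSet_Ioc).2 (ae_of_all _ fun s hs =>
            mul_nonneg hN0.le (hFpos s (hmemT s hs)))),
        ← intervalIntegral.integral_of_le (by linarith), intervalIntegral.integral_const_mul,
        ← ENNReal.ofReal_mul (by positivity)]
      refine ENNReal.ofReal_le_ofReal ?_
      rw [mul_left_comm]
      exact mul_le_mul_of_nonneg_left h hN0.le
  calc ENNReal.ofReal (c ^ ((k:ℝ) - 1)) * ENNReal.ofReal b
      = (n : ℝ≥0∞) ^ (u / 2) *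
        (ENNReal.ofReal (c ^ ((k:ℝ) - 1)) * ENNReal.ofReal (N * b)) := by
        have e : (n : ℝ≥0∞) ^ (u / 2) * ENNReal.ofReal N = 1 := by
          rw [← ENNReal.ofReal_natCast n, ENNReal.ofReal_rpow_of_pos hn0,
            ← ENNReal.ofReal_mul (by positivity), hN, ← Real.rpow_add hn0, add_neg_cancel,
            Real.rpow_zero, ENNReal.ofReal_one]
        rw [ENNReal.ofReal_mul hN0.le, mul_left_comm, ← mul_assoc (_ ^ _), e, one_mul]
    _ ≤ _ := mul_le_mul_right key _

lemma ofReal_sum_le {ι : Type} (s : Finset ι) (b : ι → ℝ) :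
    ENNReal.ofReal (∑ i ∈ s, b i) ≤ ∑ i ∈ s, ENNReal.ofReal (b i) :=
  Finset.le_sum_of_subadditive _ ENNReal.ofReal_zero.le (fun _ _ => ENNReal.ofReal_add_le) s b

/-- Summing over coordinates: the trace bound on the informations and Jensen's inequality. -/
lemma gaussBound_sum_ge {k L : ℕ} (hk : 2 ≤ k) {ε : ℝ} (hε : 0 < ε) {q : Fin L → Fin k → ℝ}
    (hq : memDEE k L ε q) {dstar : ℕ} (hd : IsOptDstar k ε dstar) {η T R u : ℝ} (hη : 0 < η)
    (hT : 0 < T) (hR : 0 ≤ R) (hu : 1 ≤ u) (hTR : R + 1 / η ≤ T) :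
    (T - R - 1 / η) / T * (truncC (R * √η) u *
      (k * (1 / Mconst k ε dstar + η) ^ (-(u / 2)))) ≤
      ∑ i, gaussBound T R (outInfo q i + η) u := by
  have hM := Mconst_pos hk hε hd
  have hJ : ∀ i, η ≤ outInfo q i + η := fun i => by have := outInfo_nonneg hk hq i; linarith
  have hC0 := truncC_nonneg (r := R * √η) (u := u) (by positivity)
  have h1 : ∀ i, (T - R - 1 / η) / T * (truncC (R * √η) u * (outInfo q i + η) ^ (-(u / 2))) ≤
      gaussBound T R (outInfo q i + η) u := by
    intro i
    have hJi : 0 < outInfo q i + η := hη.trans_le (hJ i)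
    unfold gaussBound
    rw [mul_comm (truncC _ _)]
    have h2 : 1 / (outInfo q i + η) ≤ 1 / η := one_div_le_one_div_of_le hη (hJ i)
    have h3 : truncC (R * √η) u ≤ truncC (R * √(outInfo q i + η)) u :=
      truncC_mono (by positivity) (mul_le_mul_of_nonneg_left (Real.sqrt_le_sqrt (hJ i)) hR) hu
    refine mul_le_mul (by gcongr) (by gcongr) (by positivity) (div_nonneg (by linarith) hT.le)
  refine le_trans ?_ (Finset.sum_le_sum fun i _ => h1 i)
  rw [← Finset.mul_sum, ← Finset.mul_sum]
  refine mul_le_mul_of_nonneg_left (mul_le_mul_of_nonneg_left ?_ hC0)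
    (div_nonneg (by linarith) hT.le)
  refine sum_rpow_neg_ge (fun i => hη.trans_le (hJ i)) (by positivity) (by linarith) ?_
  rw [Finset.sum_add_distrib]
  have := outInfo_sum_le hk hε hq hd
  simp only [Finset.sum_const, Finset.card_univ, Fintype.card_fin, nsmul_eq_mul]
  linarith

/-- The parameters can be chosen so that the finite-`D` bound is within `δ` of the optimum. -/
lemma exists_parameters {k : ℕ} {M u x : ℝ} (hM : 0 < M) (hu : 1 ≤ u)
    (hx : x < (k:ℝ) * Cmom u * M ^ (u / 2)) :
    ∃ η T R : ℝ, 0 < η ∧ 0 < T ∧ 0 ≤ R ∧ R + 1 / η ≤ T ∧ ∀ᶠ D : ℝ in atTop,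
      x < ((D - 2 * T) / D) ^ ((k:ℝ) - 1) * ((T - R - 1 / η) / T * (truncC (R * √η) u *
        (k * (1 / M + η) ^ (-(u / 2))))) := by
  have t1 : Tendsto (fun η : ℝ => Cmom u * (k * (1 / M + η) ^ (-(u / 2)))) (𝓝[>] 0)
      (𝓝 (Cmom u * (k * (1 / M + 0) ^ (-(u / 2))))) := by
    refine Tendsto.mono_left ?_ nhdsWithin_le_nhds
    have : (1 / M + 0 : ℝ) ≠ 0 := by rw [add_zero]; positivity
    exact ((((continuous_const.add continuous_id).tendsto (0:ℝ)).rpow_const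
      (Or.inl this)).const_mul _).const_mul _
  have e1 : Cmom u * (k * (1 / M + 0) ^ (-(u / 2))) = k * Cmom u * M ^ (u / 2) := by
    rw [add_zero, one_div, Real.inv_rpow hM.le, Real.rpow_neg hM.le, inv_inv]; ring
  rw [e1] at t1
  obtain ⟨η, h1, hη⟩ := ((t1.eventually (lt_mem_nhds hx)).and self_mem_nhdsWithin).exists
  have hsη : 0 < √η := Real.sqrt_pos.2 hη
  have t2 : Tendsto (fun R : ℝ => truncC (R * √η) u * (k * (1 / M + η) ^ (-(u / 2)))) atTop
      (𝓝 (Cmom u * (k * (1 / M + η) ^ (-(u / 2))))) :=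
    ((tendsto_truncC hu).comp (tendsto_id.atTop_mul_const hsη)).mul_const _
  obtain ⟨R, h2, hR⟩ := ((t2.eventually (lt_mem_nhds h1)).and (eventually_ge_atTop 0)).exists
  set V := truncC (R * √η) u * (k * (1 / M + η) ^ (-(u / 2))) with hV
  have t3 : Tendsto (fun T : ℝ => (T - R - 1 / η) / T * V) atTop (𝓝 (1 * V)) := by
    refine Tendsto.mul_const _ ?_
    have : Tendsto (fun T : ℝ => 1 - (R + 1 / η) / T) atTop (𝓝 (1 - 0)) :=
      tendsto_const_nhds.sub (tendsto_id.const_div_atTop _)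
    rw [sub_zero] at this
    refine this.congr' ?_
    filter_upwards [eventually_gt_atTop 0] with T hT
    field_simp
    ring
  rw [one_mul] at t3
  obtain ⟨T, h3, hT0, hTR⟩ := ((t3.eventually (lt_mem_nhds h2)).and
    ((eventually_gt_atTop 0).and (eventually_ge_atTop (R + 1 / η)))).exists
  refine ⟨η, T, R, hη, hT0, hR, hTR, ?_⟩
  set W := (T - R - 1 / η) / T * V
  have t4 : Tendsto (fun D : ℝ => ((D - 2 * T) / D) ^ ((k:ℝ) - 1) * W) atTop
      (𝓝 ((1:ℝ) ^ ((k:ℝ) - 1) * W)) := by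
    refine Tendsto.mul_const _ (Tendsto.rpow_const ?_ (Or.inl one_ne_zero))
    have : Tendsto (fun D : ℝ => 1 - (2 * T) / D) atTop (𝓝 (1 - 0)) :=
      tendsto_const_nhds.sub (tendsto_id.const_div_atTop _)
    rw [sub_zero] at this
    refine this.congr' ?_
    filter_upwards [eventually_gt_atTop 0] with D hD
    field_simp
  rw [Real.one_rpow, one_mul] at t4
  exact t4.eventually (lt_mem_nhds h3)

end

theorem statement15 (k : ℕ) (hk : 2 ≤ k) (ε u : ℝ) (hε : 0 < ε) (hu : 1 ≤ u)
    (dstar : ℕ) (hd : IsOptDstar k ε dstar) :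
    ∀ δ > (0:ℝ), ∃ D0 > (0:ℝ), ∀ D ≥ D0,
      ∀ (L : ℕ) (q : Fin L → Fin k → ℝ), memDEE k L ε q →
        ENNReal.ofReal ((k:ℝ) * Cmom u * Mconst k ε dstar ^ (u/2) - δ) ≤
          Filter.liminf (fun n : ℕ =>
            (n : ℝ≥0∞) ^ (u/2) * ∑ i, bayesRisk k L u q D n i) atTop := by
  intro δ hδ
  set x := (k:ℝ) * Cmom u * Mconst k ε dstar ^ (u / 2) - δ with hx
  obtain ⟨η, T, R, hη, hT, hR, hTR, hev⟩ := exists_parameters (k := k) (x := x)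
    (Mconst_pos hk hε hd) hu (by rw [hx]; linarith)
  obtain ⟨D1, hD1⟩ := eventually_atTop.1 hev
  refine ⟨max D1 (2 * T + 1), lt_max_of_lt_right (by linarith), fun D hD L q hq => ?_⟩
  have hxD := hD1 D ((le_max_left _ _).trans hD)
  have h2D : 2 * T < D := by have := (le_max_right D1 (2 * T + 1)).trans hD; linarith
  have hD0 : 0 < D := by linarith
  set ρ := ((D - 2 * T) / D) ^ ((k:ℝ) - 1) with hρdef
  have hρ : 0 < ρ := Real.rpow_pos_of_pos (div_pos (by linarith) hD0) _
  have hk0 : (0:ℝ) < k := by positivity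
  have hsum := gaussBound_sum_ge hk hε hq hd hη hT hR hu hTR
  have hxS := hxD.trans_le (mul_le_mul_of_nonneg_left hsum hρ.le)
  set g : Fin k → ℝ := fun i => gaussBound T R (outInfo q i + η) u with hg
  -- The slack in the strict bound `x < ρ ∑ g i` is shared equally among the `k` coordinates.
  set δ₁ := (ρ * ∑ i, g i - x) / (ρ * k) with hδ₁
  have hδ₁0 : 0 < δ₁ := div_pos (by linarith) (by positivity)
  have hx2 : x = ρ * ∑ i, (g i - δ₁) := by
    rw [Finset.sum_sub_distrib]
    simp only [Finset.sum_const, Finset.card_univ, Fintype.card_fin, nsmul_eq_mul]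
    rw [hδ₁]
    field_simp
    ring
  refine le_liminf_of_le (by isBoundedDefault) ?_
  have hall : ∀ᶠ n : ℕ in atTop, ∀ i : Fin k, ENNReal.ofReal ρ * ENNReal.ofReal (g i - δ₁) ≤
      (n : ℝ≥0∞) ^ (u / 2) * bayesRisk k L u q D n i :=
    eventually_all.2 fun i => bayesRisk_eventually hk hq i (η := ⟨η, hη.le⟩) hη hT hR hu h2D
      (b := g i - δ₁) (sub_lt_self _ hδ₁0)
  filter_upwards [hall] with n hn
  rw [hx2, ENNReal.ofReal_mul hρ.le, Finset.mul_sum]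
  calc _ ≤ ENNReal.ofReal ρ * ∑ i, ENNReal.ofReal (g i - δ₁) :=
        mul_le_mul_right (ofReal_sum_le _ _) _
    _ ≤ _ := by rw [Finset.mul_sum]; exact Finset.sum_le_sum fun i _ => hn i
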